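/- arXiv:2409.14148 — 2 statements merged into one kernel-verified Lean document; each statement's English description precedes it below -/
import Mathlib

section
/- Let 𝒳, 𝒴, 𝒵, 𝒰 be finite sets, and let P_{XYZ}, Q_{XYZ} be pmfs such that Q_{YZ|X} = Q_{Z|X} Q_{Y|Z} (X → Z → Y Markov under Q) and P_{XZ} = Q_{XZ}. For every channel P_{U|X}, with P_{UXYZ} = P_{U|X} P_{XYZ}, it holds that ∑_u P_U(u) f(P_{X|U}(·|u)) ≤ I_P(Y;U|Z) + D(P_{YZ} ‖ Q_{YZ}). -/
open scoped BigOperators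

noncomputable section

open Classical in
/-- Pushforward of a finitely supported mass function along a map. -/
def pushf {Ω α : Type*} [Fintype Ω] (p : Ω → ℝ) (f : Ω → α) : α → ℝ :=
  fun a => ∑ ω, if f ω = a then p ω else 0

/-- `p` is a probability mass function. -/
def IsPMF {α : Type*} [Fintype α] (p : α → ℝ) : Prop :=
  (∀ a, 0 ≤ p a) ∧ ∑ a, p a = 1

/-- Kullback–Leibler divergence `D(p‖q)` of mass functions, valued in `EReal`
(equal to `⊤` if `p` is not absolutely continuous w.r.t. `q`). -/
def klDiv {α : Type*} [Fintype α] (p q : α → ℝ) : EReal :=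
  if ∀ a, q a = 0 → p a = 0 then ((∑ a, p a * Real.log (p a / q a) : ℝ) : EReal) else ⊤

/-- Shannon entropy. -/
def entropy {α : Type*} [Fintype α] (p : α → ℝ) : ℝ :=
  -∑ a, p a * Real.log (p a)

/-- Conditional mutual information `I(A;B|C)` under the mass function `p`. -/
def condMI {Ω α β γ : Type*} [Fintype Ω] [Fintype α] [Fintype β] [Fintype γ]
    (p : Ω → ℝ) (A : Ω → α) (B : Ω → β) (C : Ω → γ) : ℝ :=
  entropy (pushf p (fun ω => (A ω, C ω))) + entropy (pushf p (fun ω => (B ω, C ω)))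
    - entropy (pushf p (fun ω => (A ω, B ω, C ω))) - entropy (pushf p C)

/-- First marginal of a joint mass function. -/
def margFst {α β : Type*} [Fintype α] [Fintype β] (p : α × β → ℝ) : α → ℝ :=
  fun a => ∑ b, p (a, b)

/-- Conditional mass function of the second coordinate given the first. -/
def condSnd {α β : Type*} [Fintype α] [Fintype β] (p : α × β → ℝ) : α → β → ℝ :=
  fun a b => p (a, b) / margFst p a

/-- Output distribution of a channel on an input distribution. -/
def outDist {α β : Type*} [Fintype α] [Fintype β] (ch : α → β → ℝ) (pa : α → ℝ) : β → ℝ :=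
  fun b => ∑ a, pa a * ch a b

/-- The difference functional
`f(P'_X) = sup_{Q̂_X ≪ Q_X} D(P'_Y‖Q̂_Y) − D(P'_Z‖Q̂_Z)`. -/
def fdiff {X Y Z : Type*} [Fintype X] [Fintype Y] [Fintype Z]
    (pYgX : X → Y → ℝ) (pZgX : X → Z → ℝ) (qYgX : X → Y → ℝ) (qZgX : X → Z → ℝ)
    (qX : X → ℝ) (pX' : X → ℝ) : EReal :=
  sSup {d : EReal | ∃ qhX : X → ℝ, IsPMF qhX ∧ (∀ x, qX x = 0 → qhX x = 0) ∧
    d = klDiv (outDist pYgX pX') (outDist qYgX qhX)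
        - klDiv (outDist pZgX pX') (outDist qZgX qhX)}

/-- The quantity `G_{P_XY, Q_XY, P_XZ, Q_XZ}(R)`: the supremum over finite sets `𝒰`
(represented by `Fin m`) and channels `P_{U|X}` with `I_P(U;X|Y) ≤ R` and `I_P(U;X|Z) ≤ R`
of `∑_u P_U(u) f(P_{X|U}(·|u))`. -/
def Gexp {X Y Z : Type*} [Fintype X] [Fintype Y] [Fintype Z]
    (pXY : X × Y → ℝ) (qXY : X × Y → ℝ) (pXZ : X × Z → ℝ) (qXZ : X × Z → ℝ)
    (R : ℝ) : EReal :=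
  sSup {v : EReal | ∃ (m : ℕ) (ch : X → Fin m → ℝ),
    (∀ x, IsPMF (ch x)) ∧
    condMI (fun w : Fin m × X × Y => ch w.2.1 w.1 * pXY (w.2.1, w.2.2))
      (fun w => w.1) (fun w => w.2.1) (fun w => w.2.2) ≤ R ∧
    condMI (fun w : Fin m × X × Z => ch w.2.1 w.1 * pXZ (w.2.1, w.2.2))
      (fun w => w.1) (fun w => w.2.1) (fun w => w.2.2) ≤ R ∧
    v = ∑ u : Fin m,
      ((∑ x, ch x u * margFst pXY x : ℝ) : EReal) *
        fdiff (condSnd pXY) (condSnd pXZ) (condSnd qXY) (condSnd qXZ)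
          (margFst qXY)
          (fun x => ch x u * margFst pXY x / ∑ x', ch x' u * margFst pXY x')}

/-- The error exponent of distributed hypothesis testing, via the Ahlswede–Csiszár
multi-letter characterization. -/
def errExp {X W : Type*} [Fintype X] [Fintype W]
    (pXW qXW : X × W → ℝ) (R : ℝ) : EReal :=
  sSup {v : EReal | ∃ n : ℕ, 0 < n ∧
    ∃ κ : (Fin n → X) → Fin (2 ^ ⌊(n : ℝ) * R⌋₊) → ℝ,
      (∀ x, IsPMF (κ x)) ∧
      v = (((n : ℝ)⁻¹ : ℝ) : EReal) *
        klDiv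
          (fun mw : Fin (2 ^ ⌊(n : ℝ) * R⌋₊) × (Fin n → W) =>
            ∑ x : Fin n → X, (∏ i, pXW (x i, mw.2 i)) * κ x mw.1)
          (fun mw : Fin (2 ^ ⌊(n : ℝ) * R⌋₊) × (Fin n → W) =>
            ∑ x : Fin n → X, (∏ i, qXW (x i, mw.2 i)) * κ x mw.1)}

open Finset in
lemma aux_logsum {Z : Type*} [Fintype Z] (p r : Z → ℝ) (hp : ∀ z, 0 ≤ p z) (hr : ∀ z, 0 ≤ r z)
    (h : ∀ z, r z = 0 → p z = 0) :
    (∑ z, p z) * Real.log ((∑ z, p z) / ∑ z, r z) ≤ ∑ z, p z * Real.log (p z / r z) := by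
  rcases (Finset.sum_nonneg (fun z (_ : z ∈ univ) => hp z)).eq_or_lt with h0 | h0
  · have : ∀ z, p z = 0 := fun z =>
      (Finset.sum_eq_zero_iff_of_nonneg (fun z _ => hp z)).1 h0.symm z (mem_univ z)
    simp [this]
  set S := ∑ z, p z with hS
  set R := ∑ z, r z with hR
  have hRpos : 0 < R := by
    rcases (Finset.sum_nonneg (fun z (_ : z ∈ univ) => hr z)).eq_or_lt with h1 | h1
    · exfalso
      have : ∀ z, p z = 0 := fun z => h z
        ((Finset.sum_eq_zero_iff_of_nonneg (fun z _ => hr z)).1 h1.symm z (mem_univ z))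
      simp [hS, this] at h0
    · exact h1
  have key : ∀ z, p z * Real.log (S / R) + (p z - r z * (S / R)) ≤ p z * Real.log (p z / r z) := by
    intro z
    rcases (hp z).eq_or_lt with h1 | h1
    · rw [← h1]
      have : 0 ≤ r z * (S / R) := mul_nonneg (hr z) (by positivity)
      simp; exact this
    · have hrz : 0 < r z := lt_of_le_of_ne (hr z) (fun e => h1.ne' (h z e.symm))
      have h2 := Real.one_sub_inv_le_log_of_pos (x := (p z / r z) / (S / R)) (by positivity)
      rw [Real.log_div (by positivity) (by positivity)] at h2
      have h3 := mul_le_mul_of_nonneg_left h2 h1.le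
      have h4 : p z * (1 - ((p z / r z) / (S / R))⁻¹) = p z - r z * (S / R) := by
        field_simp
      rw [h4] at h3
      linarith
  have := Finset.sum_le_sum (fun z (_ : z ∈ univ) => key z)
  rw [sum_add_distrib, ← sum_mul, sum_sub_distrib, ← sum_mul, ← hS, ← hR] at this
  have e : R * (S / R) = S := by field_simp
  rw [e] at this
  linarith

lemma aux_core {Y Z : Type*} [Fintype Y] [Fintype Z] (p r q : Y → Z → ℝ) (g s : Z → ℝ)
    (hp : ∀ y z, 0 ≤ p y z) (hr : ∀ y z, 0 ≤ r y z) (hq : ∀ y z, 0 ≤ q y z)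
    (hg : ∀ z, 0 ≤ g z) (hs : ∀ z, 0 ≤ s z)
    (hrq : ∀ y z, r y z * s z = g z * q y z)
    (hpq : ∀ y z, q y z = 0 → p y z = 0) (hps : ∀ y z, s z = 0 → p y z = 0) :
    klDiv (fun y => ∑ z, p y z) (fun y => ∑ z, r y z) - klDiv (fun z => ∑ y, p y z) g
      ≤ ((∑ y, ∑ z, p y z * Real.log (p y z / (∑ y', p y' z) * (s z / q y z)) : ℝ) : EReal) := by
  by_cases hZ : ∀ z, g z = 0 → ∑ y, p y z = 0
  · have hpr : ∀ y z, r y z = 0 → p y z = 0 := by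
      intro y z h
      have := hrq y z
      rw [h, zero_mul, eq_comm, mul_eq_zero] at this
      rcases this with h1 | h1
      · exact (Finset.sum_eq_zero_iff_of_nonneg (fun y _ => hp y z)).1 (hZ z h1) y
          (Finset.mem_univ y)
      · exact hpq y z h1
    have hY : ∀ y, ∑ z, r y z = 0 → ∑ z, p y z = 0 := by
      intro y h
      apply Finset.sum_eq_zero
      intro z _
      exact hpr y z ((Finset.sum_eq_zero_iff_of_nonneg (fun z _ => hr y z)).1 h z
          (Finset.mem_univ z))
    unfold klDiv
    rw [if_pos hY, if_pos hZ, ← EReal.coe_sub, EReal.coe_le_coe_iff]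
    have h1 := Finset.sum_le_sum (fun y (_ : y ∈ Finset.univ) =>
      aux_logsum (p y) (r y) (hp y) (hr y) (hpr y))
    have h2 : ∀ y z, p y z * Real.log (p y z / r y z) =
        p y z * Real.log ((∑ y', p y' z) / g z) +
        p y z * Real.log (p y z / (∑ y', p y' z) * (s z / q y z)) := by
      intro y z
      rcases (hp y z).eq_or_lt with h0 | h0
      · rw [← h0]; simp
      have a1 : 0 < r y z := lt_of_le_of_ne (hr y z) (fun e => h0.ne' (hpr y z e.symm))
      have a2 : 0 < q y z := lt_of_le_of_ne (hq y z) (fun e => h0.ne' (hpq y z e.symm))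
      have a3 : 0 < s z := lt_of_le_of_ne (hs z) (fun e => h0.ne' (hps y z e.symm))
      have a4 : 0 < ∑ y', p y' z := lt_of_lt_of_le h0
        (Finset.single_le_sum (f := fun y' => p y' z) (fun y' _ => hp y' z) (Finset.mem_univ y))
      have a5 : 0 < g z := lt_of_le_of_ne (hg z) (fun e => a4.ne' (hZ z e.symm))
      rw [← mul_add, ← Real.log_mul (by positivity) (by positivity)]
      congr 2
      have := hrq y z
      field_simp
      linarith
    simp only [h2, Finset.sum_add_distrib] at h1
    have h3 : ∑ y, ∑ z, p y z * Real.log ((∑ y', p y' z) / g z) =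
        ∑ z, (∑ y, p y z) * Real.log ((∑ y', p y' z) / g z) := by
      rw [Finset.sum_comm]; simp only [Finset.sum_mul]
    rw [h3] at h1
    linarith
  · have : klDiv (fun z => ∑ y, p y z) g = ⊤ := by
      unfold klDiv; rw [if_neg hZ]
    rw [this]; simp

lemma aux_push13 {X Y Z : Type*} [Fintype X] [Fintype Y] [Fintype Z] (P : X × Y × Z → ℝ) :
    pushf P (fun w => (w.1, w.2.2)) = fun c => ∑ y, P (c.1, y, c.2) := by
  classical
  funext ⟨x, z⟩
  simp [pushf, Fintype.sum_prod_type, Prod.mk.injEq, ite_and]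

lemma aux_push12 {X Y Z : Type*} [Fintype X] [Fintype Y] [Fintype Z] (P : X × Y × Z → ℝ) :
    pushf P (fun w => (w.1, w.2.1)) = fun c => ∑ z, P (c.1, c.2, z) := by
  classical
  funext ⟨x, z⟩
  simp only [pushf, Fintype.sum_prod_type, Prod.mk.injEq, ite_and]
  rw [Finset.sum_eq_single x, Finset.sum_eq_single z] <;> simp +contextual

lemma aux_push1 {X Y Z : Type*} [Fintype X] [Fintype Y] [Fintype Z] (P : X × Y × Z → ℝ) :
    pushf P (fun w => w.1) = fun x => ∑ y, ∑ z, P (x, y, z) := by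
  classical
  funext x
  simp only [pushf, Fintype.sum_prod_type]
  rw [Finset.sum_eq_single x] <;> simp +contextual

lemma aux_push3 {X Y Z : Type*} [Fintype X] [Fintype Y] [Fintype Z] (P : X × Y × Z → ℝ) :
    pushf P (fun w => w.2.2) = fun z => ∑ x, ∑ y, P (x, y, z) := by
  classical
  funext x
  simp [pushf, Fintype.sum_prod_type]

lemma aux_push23 {X A : Type*} [Fintype X] [Fintype A] (P : X × A → ℝ) :
    pushf P (fun w => w.2) = fun c => ∑ x, P (x, c) := by
  classical
  funext c
  simp [pushf, Fintype.sum_prod_type]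

lemma aux_q4_1 {U X Y Z : Type*} [Fintype U] [Fintype X] [Fintype Y] [Fintype Z]
    (P : U × X × Y × Z → ℝ) :
    pushf P (fun w => (w.2.2.1, w.2.2.2)) = fun c => ∑ u, ∑ x, P (u, x, c.1, c.2) := by
  classical
  funext ⟨y, z⟩
  simp [pushf, Fintype.sum_prod_type, Prod.mk.injEq, ite_and]

lemma aux_q4_2 {U X Y Z : Type*} [Fintype U] [Fintype X] [Fintype Y] [Fintype Z]
    (P : U × X × Y × Z → ℝ) :
    pushf P (fun w => (w.1, w.2.2.2)) = fun c => ∑ y, ∑ x, P (c.1, x, y, c.2) := by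
  classical
  funext ⟨u, z⟩
  simp only [pushf, Fintype.sum_prod_type, Prod.mk.injEq, ite_and]
  rw [Finset.sum_eq_single u, Finset.sum_comm] <;> simp +contextual

lemma aux_q4_3 {U X Y Z : Type*} [Fintype U] [Fintype X] [Fintype Y] [Fintype Z]
    (P : U × X × Y × Z → ℝ) :
    pushf P (fun w => (w.2.2.1, w.1, w.2.2.2)) = fun c => ∑ x, P (c.2.1, x, c.1, c.2.2) := by
  classical
  funext ⟨y, u, z⟩
  simp only [pushf, Fintype.sum_prod_type, Prod.mk.injEq, ite_and]
  rw [Finset.sum_eq_single u]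
  · refine Finset.sum_congr rfl fun x _ => ?_
    rw [Finset.sum_eq_single y] <;> simp +contextual
  all_goals simp +contextual

lemma aux_q4_4 {U X Y Z : Type*} [Fintype U] [Fintype X] [Fintype Y] [Fintype Z]
    (P : U × X × Y × Z → ℝ) :
    pushf P (fun w => w.2.2.2) = fun z => ∑ y, ∑ u, ∑ x, P (u, x, y, z) := by
  classical
  funext z
  simp only [pushf, Fintype.sum_prod_type]
  rw [Finset.sum_comm' (t' := Finset.univ) (s' := fun _ => Finset.univ) (by simp)]
  simp only [Finset.sum_ite_eq', Finset.mem_univ, if_true]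
  rw [Finset.sum_comm]
  rw [show (∑ y, ∑ u, ∑ x, P (u, x, y, z)) = ∑ u, ∑ x, ∑ y, P (u, x, y, z) from by
    rw [Finset.sum_comm]; exact Finset.sum_congr rfl fun u _ => Finset.sum_comm]

/-- pure real identity -/
lemma aux_ident {U Y Z : Type*} [Fintype U] [Fintype Y] [Fintype Z] (a : U → Y → Z → ℝ)
    (q : Y → Z → ℝ) (s : Z → ℝ)
    (ha : ∀ u y z, 0 ≤ a u y z) (hs : ∀ z, s z = ∑ y, ∑ u, a u y z)
    (hq : ∀ y z, q y z = 0 → ∑ u, a u y z = 0) :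
    ∑ u, ∑ y, ∑ z, a u y z * Real.log (a u y z / (∑ y', a u y' z) * (s z / q y z))
     = entropy (fun c : Y × Z => ∑ u, a u c.1 c.2) + entropy (fun c : U × Z => ∑ y, a c.1 y c.2)
      - entropy (fun c : Y × U × Z => a c.2.1 c.1 c.2.2)
      - entropy (fun z => ∑ y, ∑ u, a u y z)
      + ∑ c : Y × Z, (∑ u, a u c.1 c.2) * Real.log ((∑ u, a u c.1 c.2) / q c.1 c.2) := by
  have h1 : ∀ u y z, a u y z * Real.log (a u y z / (∑ y', a u y' z) * (s z / q y z)) =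
      - (a u y z * Real.log (∑ u, a u y z)) - a u y z * Real.log (∑ y, a u y z)
      + a u y z * Real.log (a u y z) + a u y z * Real.log (∑ y, ∑ u, a u y z)
      + a u y z * Real.log ((∑ u, a u y z) / q y z) := by
    intro u y z
    rcases (ha u y z).eq_or_lt with h0 | h0
    · rw [← h0]; simp
    have b1 : 0 < ∑ y', a u y' z := lt_of_lt_of_le h0
        (Finset.single_le_sum (f := fun y' => a u y' z) (fun y' _ => ha u y' z) (Finset.mem_univ y))
    have b2 : 0 < ∑ u', a u' y z := lt_of_lt_of_le h0
        (Finset.single_le_sum (f := fun u' => a u' y z) (fun y' _ => ha _ y z) (Finset.mem_univ u))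
    have b3 : 0 < ∑ y', ∑ u', a u' y' z := lt_of_lt_of_le b2
        (Finset.single_le_sum (f := fun y' => ∑ u', a u' y' z)
          (fun y' _ => Finset.sum_nonneg fun _ _ => ha _ y' z) (Finset.mem_univ y))
    have b4 : q y z ≠ 0 := fun e => b2.ne' (hq y z e)
    rw [hs, Real.log_mul (by positivity) (by positivity), Real.log_div (by positivity) (by positivity),
      Real.log_div (by positivity) b4, Real.log_div (by positivity) b4]
    ring
  simp only [h1, Finset.sum_add_distrib, Finset.sum_sub_distrib, Finset.sum_neg_distrib, entropy,
    Fintype.sum_prod_type]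
  have c1 : ∀ F : Y → Z → ℝ, ∑ u, ∑ y, ∑ z, a u y z * F y z = ∑ y, ∑ z, (∑ u, a u y z) * F y z := by
    intro F
    rw [Finset.sum_comm]
    refine Finset.sum_congr rfl fun y _ => ?_
    rw [Finset.sum_comm]
    simp only [Finset.sum_mul]
  have c2 : ∑ u, ∑ y, ∑ z, a u y z * Real.log (∑ y, a u y z) =
      ∑ u, ∑ z, (∑ y, a u y z) * Real.log (∑ y, a u y z) := by
    refine Finset.sum_congr rfl fun y _ => ?_
    rw [Finset.sum_comm]
    simp only [Finset.sum_mul]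
  have c3 : ∑ u, ∑ y, ∑ z, a u y z * Real.log (a u y z) =
      ∑ y, ∑ u, ∑ z, a u y z * Real.log (a u y z) := Finset.sum_comm
  rw [c1 (fun y z => Real.log (∑ u, a u y z)), c1 (fun y z => Real.log ((∑ u, a u y z) / q y z)),
    c1 (fun y z => Real.log (∑ y, ∑ u, a u y z)), c2, c3]
  have c4 : ∑ y, ∑ z, (∑ u, a u y z) * Real.log (∑ y, ∑ u, a u y z) =
      ∑ z, (∑ y, ∑ u, a u y z) * Real.log (∑ y, ∑ u, a u y z) := by
    rw [Finset.sum_comm]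
    simp only [Finset.sum_mul]
  rw [c4]
  ring

lemma aux_coe_sum {ι : Type*} (t : Finset ι) (f : ι → ℝ) :
    ((∑ i ∈ t, f i : ℝ) : EReal) = ∑ i ∈ t, (f i : EReal) :=
  map_sum (⟨⟨Real.toEReal, EReal.coe_zero⟩, EReal.coe_add⟩ : ℝ →+ EReal) f t

/-- If `X → Z → Y` is Markov under `Q` and `P_XZ = Q_XZ`, then for every
channel `P_{U|X}`, `∑_u P_U(u) f(P_{X|U}(·|u)) ≤ I_P(Y;U|Z) + D(P_YZ ‖ Q_YZ)`. -/
theorem fdiff_le_condMI_add_klDiv {X Y Z U : Type*}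
    [Fintype X] [Fintype Y] [Fintype Z] [Fintype U]
    (P Q : X × Y × Z → ℝ) (hP : IsPMF P) (hQ : IsPMF Q)
    (hMarkov : ∀ x y z, Q (x, y, z) * pushf Q (fun w => w.2.2) z
      = pushf Q (fun w => (w.1, w.2.2)) (x, z) * pushf Q (fun w => (w.2.1, w.2.2)) (y, z))
    (hPQXZ : pushf P (fun w => (w.1, w.2.2)) = pushf Q (fun w => (w.1, w.2.2)))
    (ch : X → U → ℝ) (hch : ∀ x, IsPMF (ch x)) :
    (∑ u, ((∑ x, ch x u * pushf P (fun w => w.1) x : ℝ) : EReal) *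
        fdiff (condSnd (pushf P (fun w => (w.1, w.2.1))))
          (condSnd (pushf P (fun w => (w.1, w.2.2))))
          (condSnd (pushf Q (fun w => (w.1, w.2.1))))
          (condSnd (pushf Q (fun w => (w.1, w.2.2))))
          (pushf Q (fun w => w.1))
          (fun x => ch x u * pushf P (fun w => w.1) x /
            ∑ x', ch x' u * pushf P (fun w => w.1) x'))
      ≤ ((condMI (fun w : U × X × Y × Z => ch w.2.1 w.1 * P w.2)
            (fun w => w.2.2.1) (fun w => w.1) (fun w => w.2.2.2) : ℝ) : EReal)
        + klDiv (pushf P (fun w => w.2)) (pushf Q (fun w => w.2)) := by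
  classical
  set a : U → Y → Z → ℝ := fun u y z => ∑ x, ch x u * P (x, y, z) with ha
  set q : Y → Z → ℝ := fun y z => ∑ x, Q (x, y, z) with hq
  set s : Z → ℝ := fun z => ∑ x, ∑ y, Q (x, y, z) with hs
  have ha0 : ∀ u y z, 0 ≤ a u y z := fun u y z =>
    Finset.sum_nonneg fun x _ => mul_nonneg ((hch x).1 u) (hP.1 _)
  have hsum : ∀ y z, ∑ u, a u y z = ∑ x, P (x, y, z) := by
    intro y z
    simp only [ha]
    rw [Finset.sum_comm]
    refine Finset.sum_congr rfl fun x _ => ?_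
    rw [← Finset.sum_mul, (hch x).2, one_mul]
  have hPQ' : ∀ x z, ∑ y, P (x, y, z) = ∑ y, Q (x, y, z) := by
    intro x z
    rw [aux_push13, aux_push13] at hPQXZ
    exact congrFun hPQXZ (x, z)
  have hsa : ∀ z, s z = ∑ y, ∑ u, a u y z := by
    intro z
    simp only [hsum, hs, ← hPQ']
    rw [Finset.sum_comm]
  have hM : ∀ x y z, Q (x, y, z) * s z = (∑ y, Q (x, y, z)) * q y z := by
    intro x y z
    have := hMarkov x y z
    rw [aux_push3, aux_push13, show (fun w : X × Y × Z => (w.2.1, w.2.2)) = (fun w => w.2) from rfl,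
      aux_push23] at this
    exact this
  by_cases hac : ∀ y z, q y z = 0 → ∑ u, a u y z = 0
  swap
  · have : klDiv (pushf P (fun w => w.2)) (pushf Q (fun w => w.2)) = ⊤ := by
      unfold klDiv
      rw [if_neg]
      intro h
      apply hac
      intro y z h0
      have := h (y, z)
      rw [aux_push23, aux_push23] at this
      rw [hsum]
      exact this h0
    rw [this, EReal.coe_add_top]
    exact le_top
  have hR : ((condMI (fun w : U × X × Y × Z => ch w.2.1 w.1 * P w.2)
            (fun w => w.2.2.1) (fun w => w.1) (fun w => w.2.2.2) : ℝ) : EReal)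
        + klDiv (pushf P (fun w => w.2)) (pushf Q (fun w => w.2)) =
      ((∑ u, ∑ y, ∑ z, a u y z * Real.log (a u y z / (∑ y', a u y' z) * (s z / q y z)) : ℝ)
        : EReal) := by
    rw [aux_ident a q s ha0 hsa hac]
    unfold condMI klDiv
    rw [aux_q4_1, aux_q4_2, aux_q4_3, aux_q4_4, aux_push23, aux_push23, if_pos]
    · rw [← EReal.coe_add]
      simp only [ha, hsum]
      simp only [ha] at hsum
      simp only [hsum, hq]
    · rintro ⟨y, z⟩ h0
      have := hac y z h0
      rw [hsum] at this
      exact this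
  rw [hR, aux_coe_sum]
  refine Finset.sum_le_sum fun u _ => ?_
  set w : ℝ := ∑ x, ch x u * pushf P (fun w => w.1) x with hw
  have hPX0 : ∀ x, 0 ≤ pushf P (fun w => w.1) x := by
    intro x; rw [aux_push1]
    exact Finset.sum_nonneg fun _ _ => Finset.sum_nonneg fun _ _ => hP.1 _
  have hw0 : 0 ≤ w := Finset.sum_nonneg fun x _ => mul_nonneg ((hch x).1 u) (hPX0 x)
  have hwa : w = ∑ y, ∑ z, a u y z := by
    simp only [hw, ha, aux_push1, Finset.mul_sum]
    rw [Finset.sum_comm]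
    exact Finset.sum_congr rfl fun y _ => Finset.sum_comm
  rcases hw0.eq_or_lt with h0 | hwpos
  · have : ∀ y z, a u y z = 0 := by
      intro y z
      have h1 := hwa
      rw [← h0, eq_comm, Finset.sum_eq_zero_iff_of_nonneg
        (fun y _ => Finset.sum_nonneg fun z _ => ha0 u y z)] at h1
      exact (Finset.sum_eq_zero_iff_of_nonneg (fun z _ => ha0 u y z)).1
        (h1 y (Finset.mem_univ y)) z (Finset.mem_univ z)
    simp [← h0, this]
  have hscale : ∑ y, ∑ z, a u y z * Real.log (a u y z / (∑ y', a u y' z) * (s z / q y z)) =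
      w * ∑ y, ∑ z, (a u y z / w) *
        Real.log ((a u y z / w) / (∑ y', a u y' z / w) * (s z / q y z)) := by
    simp only [Finset.mul_sum]
    refine Finset.sum_congr rfl fun y _ => Finset.sum_congr rfl fun z _ => ?_
    rw [← Finset.sum_div, div_div_div_cancel_right₀ hwpos.ne']
    field_simp
  rw [hscale, EReal.coe_mul]
  refine mul_le_mul_of_nonneg_left ?_ (by exact_mod_cast hw0)
  unfold fdiff
  apply sSup_le
  rintro d ⟨qh, hqh, hqhX, rfl⟩
  have hPm : ∀ x y z, pushf P (fun w => w.1) x = 0 → P (x, y, z) = 0 := by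
    intro x y z h
    rw [aux_push1] at h
    have h1 := (Finset.sum_eq_zero_iff_of_nonneg
        (fun y _ => Finset.sum_nonneg fun z _ => hP.1 (x, y, z))).1 h y (Finset.mem_univ y)
    exact (Finset.sum_eq_zero_iff_of_nonneg (fun z _ => hP.1 (x, y, z))).1 h1 z (Finset.mem_univ z)
  set PX := pushf P (fun w => w.1) with hPX
  set QX := pushf Q (fun w => w.1) with hQX
  have m1 : ∀ x, margFst (pushf P (fun w => (w.1, w.2.1))) x = PX x := by
    intro x; rw [hPX, aux_push1, aux_push12]; rfl
  have m2 : ∀ x, margFst (pushf P (fun w => (w.1, w.2.2))) x = PX x := by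
    intro x; rw [hPX, aux_push1, aux_push13]; exact Finset.sum_comm
  have m3 : ∀ x, margFst (pushf Q (fun w => (w.1, w.2.1))) x = QX x := by
    intro x; rw [hQX, aux_push1, aux_push12]; rfl
  have m4 : ∀ x, margFst (pushf Q (fun w => (w.1, w.2.2))) x = QX x := by
    intro x; rw [hQX, aux_push1, aux_push13]; exact Finset.sum_comm
  have cancel : ∀ x y z, ch x u * PX x / w * (P (x, y, z) / PX x) = ch x u * P (x, y, z) / w := by
    intro x y z
    by_cases h : PX x = 0
    · simp [h, hPm x y z h]
    · field_simp
  have e1 : outDist (condSnd (pushf P (fun w => (w.1, w.2.1)))) (fun x => ch x u * PX x / w)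
      = fun y => ∑ z, a u y z / w := by
    funext y
    simp only [outDist, condSnd, m1]
    simp only [aux_push12, ha, Finset.sum_div, Finset.mul_sum, cancel]
    exact Finset.sum_comm
  have e2 : outDist (condSnd (pushf P (fun w => (w.1, w.2.2)))) (fun x => ch x u * PX x / w)
      = fun z => ∑ y, a u y z / w := by
    funext y
    simp only [outDist, condSnd, m2]
    simp only [aux_push13, ha, Finset.sum_div, Finset.mul_sum, cancel]
    exact Finset.sum_comm
  have e3 : outDist (condSnd (pushf Q (fun w => (w.1, w.2.1)))) qh
      = fun y => ∑ z, ∑ x, qh x * (Q (x, y, z) / QX x) := by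
    funext y
    simp only [outDist, condSnd, m3]
    simp only [aux_push12, Finset.sum_div, Finset.mul_sum]
    exact Finset.sum_comm
  have hQX0 : ∀ x, 0 ≤ QX x := by
    intro x; rw [hQX, aux_push1]
    exact Finset.sum_nonneg fun _ _ => Finset.sum_nonneg fun _ _ => hQ.1 _
  have hq0 : ∀ y z, 0 ≤ q y z := fun y z => Finset.sum_nonneg fun x _ => hQ.1 _
  have e4 : outDist (condSnd (pushf Q (fun w => (w.1, w.2.2)))) qh
      = fun z => ∑ x, qh x * ((∑ y, Q (x, y, z)) / QX x) := by
    funext y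
    simp only [outDist, condSnd, m4]
    simp only [aux_push13]
  rw [e1, e2, e3, e4]
  have hau : ∀ y z, ∑ u, a u y z = 0 → a u y z = 0 := fun y z h =>
    (Finset.sum_eq_zero_iff_of_nonneg (fun u _ => ha0 u y z)).1 h u (Finset.mem_univ u)
  refine aux_core (fun y z => a u y z / w) (fun y z => ∑ x, qh x * (Q (x, y, z) / QX x)) q _ s
    (fun y z => div_nonneg (ha0 u y z) hw0)
    (fun y z => Finset.sum_nonneg fun x _ => mul_nonneg (hqh.1 x) (div_nonneg (hQ.1 _) (hQX0 x)))
    hq0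
    (fun z => Finset.sum_nonneg fun x _ => mul_nonneg (hqh.1 x)
      (div_nonneg (Finset.sum_nonneg fun y _ => hQ.1 _) (hQX0 x)))
    (fun z => Finset.sum_nonneg fun x _ => Finset.sum_nonneg fun y _ => hQ.1 _) ?_ ?_ ?_
  · intro y z
    simp only [Finset.sum_mul]
    refine Finset.sum_congr rfl fun x _ => ?_
    have := hM x y z
    calc qh x * (Q (x, y, z) / QX x) * s z = qh x / QX x * (Q (x, y, z) * s z) := by ring
      _ = _ := by rw [this]; ring
  · intro y z h
    simp [hau y z (hac y z h)]
  · intro y z h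
    have h1 := hsa z
    rw [h, eq_comm, Finset.sum_eq_zero_iff_of_nonneg
        (fun y _ => Finset.sum_nonneg fun u _ => ha0 u y z)] at h1
    simp [hau y z (h1 y (Finset.mem_univ y))]


end
end

section
/- Let 𝒳, 𝒴, 𝒵 be finite sets, R > 0, and let P_{XYZ}, Q_{XYZ} be pmfs such that Q_{YZ|X} = Q_{Z|X} Q_{Y|Z} (X → Z → Y Markov under Q), P_{XZ} = Q_{XZ}, and D(P_{XY}‖Q_{XY}) < ∞. Then E_{P_{XY},Q_{XY}}(R) ≤ sup over finite 𝒰 and channels P_{U|X} with I_P(U;X|Y) ≤ R and I_P(U;X|Z) ≤ R of I_P(Y;U|Z), plus D(P_{YZ}‖Q_{YZ}). -/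
open scoped BigOperators

noncomputable section

section helpers

open Classical in
theorem pushf_def {Ω α : Type*} [Fintype Ω] (p : Ω → ℝ) (f : Ω → α) (a : α) :
    pushf p f a = ∑ ω, if f ω = a then p ω else 0 := rfl

theorem pushf_nonneg {Ω α : Type*} [Fintype Ω] {p : Ω → ℝ} (hp : ∀ ω, 0 ≤ p ω) (f : Ω → α)
    (a : α) : 0 ≤ pushf p f a := by
  rw [pushf_def]
  exact Finset.sum_nonneg fun ω _ => by split_ifs <;> simp [hp]

theorem le_pushf {Ω α : Type*} [Fintype Ω] {p : Ω → ℝ} (hp : ∀ ω, 0 ≤ p ω) (f : Ω → α)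
    (ω : Ω) : p ω ≤ pushf p f (f ω) := by
  classical
  rw [pushf_def]
  have := Finset.single_le_sum (f := fun ω' => if f ω' = f ω then p ω' else 0)
    (fun ω' _ => by split_ifs <;> simp [hp]) (Finset.mem_univ ω)
  simpa using this

theorem pushf_pos {Ω α : Type*} [Fintype Ω] {p : Ω → ℝ} (hp : ∀ ω, 0 ≤ p ω) (f : Ω → α)
    {ω : Ω} (h : p ω ≠ 0) : 0 < pushf p f (f ω) :=
  lt_of_lt_of_le (lt_of_le_of_ne (hp ω) (Ne.symm h)) (le_pushf hp f ω)

theorem sum_pushf_mul {Ω α : Type*} [Fintype Ω] [Fintype α] (p : Ω → ℝ) (f : Ω → α)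
    (F : α → ℝ) : ∑ a, pushf p f a * F a = ∑ ω, p ω * F (f ω) := by
  classical
  simp only [pushf_def, Finset.sum_mul]
  rw [Finset.sum_comm]
  refine Finset.sum_congr rfl fun ω _ => ?_
  simp [ite_mul]

theorem sum_pushf {Ω α : Type*} [Fintype Ω] [Fintype α] (p : Ω → ℝ) (f : Ω → α) :
    ∑ a, pushf p f a = ∑ ω, p ω := by
  simpa using sum_pushf_mul p f (fun _ => 1)

theorem pushf_pushf {Ω α β : Type*} [Fintype Ω] [Fintype α] (p : Ω → ℝ) (f : Ω → α)
    (g : α → β) : pushf (pushf p f) g = pushf p (fun ω => g (f ω)) := by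
  classical
  funext b
  have := sum_pushf_mul p f (fun a => if g a = b then 1 else 0)
  simp only [mul_ite, mul_one, mul_zero] at this
  simpa only [pushf_def _ g, pushf_def _ (fun ω => g (f ω))] using this

theorem pushf_fst {Ω α β : Type*} [Fintype Ω] [Fintype β] (p : Ω → ℝ)
    (f : Ω → α) (g : Ω → β) (a : α) :
    ∑ b, pushf p (fun ω => (f ω, g ω)) (a, b) = pushf p f a := by
  classical
  simp only [pushf_def]
  rw [Finset.sum_comm]
  refine Finset.sum_congr rfl fun ω _ => ?_
  by_cases h : f ω = a <;> simp [h]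

theorem pushf_congr {Ω α β : Type*} [Fintype Ω] (p : Ω → ℝ) (f : Ω → α) (g : Ω → β)
    (h : ∀ ω ω', f ω = f ω' ↔ g ω = g ω') (ω : Ω) :
    pushf p f (f ω) = pushf p g (g ω) := by
  classical
  simp only [pushf_def, h]

/-- entropy of a random variable -/
def Hf {Ω α : Type*} [Fintype Ω] (p : Ω → ℝ) (f : Ω → α) : ℝ :=
  -∑ ω, p ω * Real.log (pushf p f (f ω))

/-- divergence of a random variable -/
def Dk {Ω α : Type*} [Fintype Ω] (p q : Ω → ℝ) (f : Ω → α) : ℝ :=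
  ∑ ω, p ω * Real.log (pushf p f (f ω) / pushf q f (f ω))

theorem entropy_pushf {Ω α : Type*} [Fintype Ω] [Fintype α] (p : Ω → ℝ) (f : Ω → α) :
    entropy (pushf p f) = Hf p f := by
  rw [entropy, Hf, sum_pushf_mul p f (fun a => Real.log (pushf p f a))]

theorem Hf_congr {Ω α β : Type*} [Fintype Ω] (p : Ω → ℝ) (f : Ω → α) (g : Ω → β)
    (h : ∀ ω ω', f ω = f ω' ↔ g ω = g ω') : Hf p f = Hf p g := by
  simp only [Hf, pushf_congr p f g h]

theorem Dk_congr {Ω α β : Type*} [Fintype Ω] (p q : Ω → ℝ) (f : Ω → α) (g : Ω → β)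
    (h : ∀ ω ω', f ω = f ω' ↔ g ω = g ω') : Dk p q f = Dk p q g := by
  simp only [Dk, pushf_congr _ f g h]

theorem condMI_eq {Ω α β γ : Type*} [Fintype Ω] [Fintype α] [Fintype β] [Fintype γ]
    (p : Ω → ℝ) (A : Ω → α) (B : Ω → β) (C : Ω → γ) :
    condMI p A B C = Hf p (fun ω => (A ω, C ω)) + Hf p (fun ω => (B ω, C ω))
      - Hf p (fun ω => (A ω, B ω, C ω)) - Hf p C := by
  simp only [condMI, entropy_pushf]

theorem condMI_pushf {Ω Ω' α β γ : Type*} [Fintype Ω] [Fintype Ω'] [Fintype α] [Fintype β]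
    [Fintype γ] (p : Ω → ℝ) (g : Ω → Ω') (A : Ω' → α) (B : Ω' → β) (C : Ω' → γ) :
    condMI (pushf p g) A B C
      = condMI p (fun ω => A (g ω)) (fun ω => B (g ω)) (fun ω => C (g ω)) := by
  simp only [condMI, pushf_pushf]

theorem gibbs {α : Type*} [Fintype α] (p s : α → ℝ) (hp : ∀ a, 0 ≤ p a) (hs : ∀ a, 0 ≤ s a)
    (hac : ∀ a, p a ≠ 0 → s a ≠ 0) (hsum : ∑ a, s a ≤ ∑ a, p a) :
    ∑ a, p a * Real.log (s a / p a) ≤ 0 := by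
  have h : ∀ a, p a * Real.log (s a / p a) ≤ s a - p a := by
    intro a
    rcases eq_or_lt_of_le (hp a) with h | h
    · simp [← h, hs a]
    · have h1 : 0 < s a := lt_of_le_of_ne (hs a) (Ne.symm (hac a h.ne'))
      have := Real.log_le_sub_one_of_pos (div_pos h1 h)
      calc p a * Real.log (s a / p a) ≤ p a * (s a / p a - 1) :=
            mul_le_mul_of_nonneg_left this h.le
        _ = s a - p a := by field_simp
  calc _ ≤ ∑ a, (s a - p a) := Finset.sum_le_sum fun a _ => h a
    _ ≤ 0 := by rw [Finset.sum_sub_distrib]; linarith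

/-- data processing -/
theorem Dk_mono {Ω α β : Type*} [Fintype Ω] [Fintype α] [Fintype β] (p q : Ω → ℝ)
    (hp : ∀ ω, 0 ≤ p ω) (hq : ∀ ω, 0 ≤ q ω) (hpq : ∀ ω, p ω ≠ 0 → q ω ≠ 0)
    (A : Ω → α) (B : Ω → β) : Dk p q A ≤ Dk p q (fun ω => (A ω, B ω)) := by
  have key := gibbs (pushf p (fun ω => (A ω, B ω)))
    (fun c => pushf q (fun ω => (A ω, B ω)) c * pushf p A c.1 / pushf q A c.1)
    (pushf_nonneg hp _)
    (fun c => div_nonneg (mul_nonneg (pushf_nonneg hq _ _) (pushf_nonneg hp _ _))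
      (pushf_nonneg hq _ _))
    (by
      classical
      rintro ⟨a, b⟩ h
      rw [pushf_def] at h
      obtain ⟨ω, -, hω⟩ := Finset.exists_ne_zero_of_sum_ne_zero h
      split_ifs at hω with h1
      · rw [Prod.mk.injEq] at h1
        obtain ⟨rfl, rfl⟩ := h1
        have := pushf_pos hp A hω
        have := pushf_pos hq A (hpq ω hω)
        have := pushf_pos hq (fun ω => (A ω, B ω)) (hpq ω hω)
        dsimp only at *
        positivity
      · exact absurd rfl hω)
    (by
      rw [sum_pushf, Fintype.sum_prod_type]
      have h1 : ∀ a, ∑ b, pushf q (fun ω => (A ω, B ω)) (a, b) * pushf p A a / pushf q A a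
          ≤ pushf p A a := by
        intro a
        rw [← Finset.sum_div, ← Finset.sum_mul, pushf_fst]
        by_cases h : pushf q A a = 0
        · simp [h, pushf_nonneg hp]
        · rw [mul_div_assoc, mul_div_cancel₀ _ h]
      calc _ ≤ ∑ a, pushf p A a := Finset.sum_le_sum fun a _ => h1 a
        _ = _ := sum_pushf p A)
  rw [sum_pushf_mul p (fun ω => (A ω, B ω)) (fun c => Real.log (pushf q (fun ω => (A ω, B ω)) c
    * pushf p A c.1 / pushf q A c.1 / pushf p (fun ω => (A ω, B ω)) c))] at key
  have : Dk p q A - Dk p q (fun ω => (A ω, B ω)) ≤ 0 := by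
    refine le_of_eq_of_le ?_ key
    rw [Dk, Dk, ← Finset.sum_sub_distrib]
    refine Finset.sum_congr rfl fun ω _ => ?_
    by_cases h : p ω = 0
    · simp [h]
    · have h1 := pushf_pos hp A h
      have h2 := pushf_pos hq A (hpq ω h)
      have h3 := pushf_pos hq (fun ω => (A ω, B ω)) (hpq ω h)
      have h4 := pushf_pos hp (fun ω => (A ω, B ω)) h
      dsimp only at *
      rw [← mul_sub, Real.log_div, Real.log_div, Real.log_div, Real.log_div, Real.log_mul]
        <;> first | positivity | ring
  linarith

/-- submodularity -/
theorem submod {Ω α β γ : Type*} [Fintype Ω] [Fintype α] [Fintype β] [Fintype γ] (p : Ω → ℝ)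
    (hp : ∀ ω, 0 ≤ p ω) (A : Ω → α) (B : Ω → β) (C : Ω → γ) :
    Hf p (fun ω => (A ω, B ω, C ω)) + Hf p C
      ≤ Hf p (fun ω => (A ω, C ω)) + Hf p (fun ω => (B ω, C ω)) := by
  have key := gibbs (pushf p (fun ω => (C ω, A ω, B ω)))
    (fun c => pushf p (fun ω => (C ω, A ω)) (c.1, c.2.1)
      * pushf p (fun ω => (C ω, B ω)) (c.1, c.2.2) / pushf p C c.1)
    (pushf_nonneg hp _)
    (fun c => div_nonneg (mul_nonneg (pushf_nonneg hp _ _) (pushf_nonneg hp _ _))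
      (pushf_nonneg hp _ _))
    (by
      classical
      rintro ⟨c, a, b⟩ h
      rw [pushf_def] at h
      obtain ⟨ω, -, hω⟩ := Finset.exists_ne_zero_of_sum_ne_zero h
      split_ifs at hω with h1
      · rw [Prod.mk.injEq, Prod.mk.injEq] at h1
        obtain ⟨rfl, rfl, rfl⟩ := h1
        have := pushf_pos hp C hω
        have := pushf_pos hp (fun ω => (C ω, A ω)) hω
        have := pushf_pos hp (fun ω => (C ω, B ω)) hω
        dsimp only at *
        positivity
      · exact absurd rfl hω)
    (by
      rw [sum_pushf, Fintype.sum_prod_type]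
      have h1 : ∀ c, ∑ ab : α × β, pushf p (fun ω => (C ω, A ω)) (c, ab.1)
          * pushf p (fun ω => (C ω, B ω)) (c, ab.2) / pushf p C c ≤ pushf p C c := by
        intro c
        rw [← Finset.sum_div, Fintype.sum_prod_type]
        simp only [← Finset.mul_sum, ← Finset.sum_mul, pushf_fst]
        by_cases h : pushf p C c = 0
        · simp [h]
        · rw [mul_div_assoc, div_self h, mul_one]
      calc _ ≤ ∑ a, pushf p C a := Finset.sum_le_sum fun a _ => h1 a
        _ = _ := sum_pushf p C)
  rw [sum_pushf_mul p (fun ω => (C ω, A ω, B ω)) (fun c => Real.log (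
      pushf p (fun ω => (C ω, A ω)) (c.1, c.2.1)
      * pushf p (fun ω => (C ω, B ω)) (c.1, c.2.2) / pushf p C c.1
      / pushf p (fun ω => (C ω, A ω, B ω)) c))] at key
  rw [Hf_congr p (fun ω => (A ω, B ω, C ω)) (fun ω => (C ω, A ω, B ω))
      (by intro ω ω'; simp only [Prod.mk.injEq]; tauto),
    Hf_congr p (fun ω => (A ω, C ω)) (fun ω => (C ω, A ω))
      (by intro ω ω'; simp only [Prod.mk.injEq]; tauto),
    Hf_congr p (fun ω => (B ω, C ω)) (fun ω => (C ω, B ω))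
      (by intro ω ω'; simp only [Prod.mk.injEq]; tauto)]
  have : Hf p (fun ω => (C ω, A ω, B ω)) + Hf p C
      - Hf p (fun ω => (C ω, A ω)) - Hf p (fun ω => (C ω, B ω)) ≤ 0 := by
    refine le_of_eq_of_le ?_ key
    simp only [Hf]
    rw [← sub_eq_zero]
    simp only [← Finset.sum_neg_distrib, ← Finset.sum_sub_distrib, ← Finset.sum_add_distrib]
    refine Finset.sum_eq_zero fun ω _ => ?_
    by_cases h : p ω = 0
    · simp [h]
    · have h1 := pushf_pos hp C h
      have h2 := pushf_pos hp (fun ω => (C ω, A ω)) h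
      have h3 := pushf_pos hp (fun ω => (C ω, B ω)) h
      have h4 := pushf_pos hp (fun ω => (C ω, A ω, B ω)) h
      dsimp only at *
      rw [Real.log_div, Real.log_div, Real.log_mul]
        <;> first | positivity | ring
  linarith

theorem Hf_le_pair {Ω α β : Type*} [Fintype Ω] (p : Ω → ℝ)
    (hp : ∀ ω, 0 ≤ p ω) (A : Ω → α) (B : Ω → β) :
    Hf p A ≤ Hf p (fun ω => (B ω, A ω)) := by
  classical
  rw [Hf, Hf, neg_le_neg_iff]
  refine Finset.sum_le_sum fun ω _ => ?_
  by_cases h : p ω = 0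
  · simp [h]
  · refine mul_le_mul_of_nonneg_left (Real.log_le_log ?_ ?_) (hp ω)
    · exact pushf_pos hp (fun ω => (B ω, A ω)) h
    · simp only [pushf_def]
      refine Finset.sum_le_sum fun ω' _ => ?_
      by_cases h1 : A ω' = A ω
      · rw [if_pos h1]; split_ifs <;> simp [hp]
      · rw [if_neg h1, if_neg]
        simp [h1]

theorem Hf_const {Ω : Type*} [Fintype Ω] (p : Ω → ℝ) (hp : IsPMF p) :
    Hf p (fun _ => ()) = 0 := by
  simp [Hf, pushf_def, hp.2]

theorem Hf_pair_le {Ω α β : Type*} [Fintype Ω] [Fintype α] [Fintype β] (p : Ω → ℝ)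
    (hp : IsPMF p) (A : Ω → α) (B : Ω → β) :
    Hf p (fun ω => (A ω, B ω)) ≤ Hf p A + Hf p B := by
  have := submod p hp.1 A B (fun _ => ())
  rw [Hf_const p hp, Hf_congr p (fun ω => (A ω, B ω, ())) (fun ω => (A ω, B ω)) (by simp),
    Hf_congr p (fun ω => (A ω, ())) A (by simp),
    Hf_congr p (fun ω => (B ω, ())) B (by simp)] at this
  linarith

theorem Hf_le_card {Ω α : Type*} [Fintype Ω] [Fintype α] (p : Ω → ℝ)
    (hp : IsPMF p) (A : Ω → α) :
    Hf p A ≤ Real.log (Fintype.card α) := by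
  have hs : ∑ a, pushf p A a = 1 := by rw [sum_pushf, hp.2]
  have hne : Nonempty α := by
    by_contra h
    rw [not_nonempty_iff] at h
    simp at hs
  have hc : (0 : ℝ) < Fintype.card α := by exact_mod_cast Fintype.card_pos
  have key := gibbs (pushf p A) (fun _ => (Fintype.card α : ℝ)⁻¹) (pushf_nonneg hp.1 _)
    (fun _ => by positivity) (fun _ _ => by positivity)
    (by rw [hs]; simp [hc.ne'])
  rw [sum_pushf_mul p A (fun a => Real.log ((Fintype.card α : ℝ)⁻¹ / pushf p A a))] at key
  have : Hf p A - Real.log (Fintype.card α) ≤ 0 := by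
    refine le_of_eq_of_le ?_ key
    have : Real.log (Fintype.card α) = ∑ ω, p ω * Real.log (Fintype.card α) := by
      rw [← Finset.sum_mul, hp.2, one_mul]
    rw [this, Hf, ← Finset.sum_neg_distrib, ← Finset.sum_sub_distrib]
    refine Finset.sum_congr rfl fun ω _ => ?_
    by_cases h : p ω = 0
    · simp [h]
    · have h1 := pushf_pos hp.1 A h
      rw [Real.log_div, Real.log_inv] <;> first | positivity | ring
  linarith

/-- the single-letter step -/
theorem step {Ω α β γ : Type*} [Fintype Ω] [Fintype α] [Fintype β] [Fintype γ] (p q : Ω → ℝ)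
    (hp : ∀ ω, 0 ≤ p ω) (hq : ∀ ω, 0 ≤ q ω) (hpq : ∀ ω, p ω ≠ 0 → q ω ≠ 0)
    (U : Ω → α) (Y : Ω → β) (Z : Ω → γ)
    (hm : ∀ u y z, pushf q (fun ω => (U ω, Y ω, Z ω)) (u, y, z) * pushf q Z z
      = pushf q (fun ω => (U ω, Z ω)) (u, z) * pushf q (fun ω => (Y ω, Z ω)) (y, z))
    (hz : ∀ z, pushf p Z z = pushf q Z z) :
    Dk p q (fun ω => (U ω, Y ω)) - Dk p q (fun ω => (U ω, Z ω))
      ≤ condMI p Y U Z + Dk p q (fun ω => (Y ω, Z ω)) := by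
  have h1 := Dk_mono p q hp hq hpq (fun ω => (U ω, Y ω)) Z
  rw [Dk_congr p q (fun ω => ((U ω, Y ω), Z ω)) (fun ω => (U ω, Y ω, Z ω))
    (by intro ω ω'; simp only [Prod.mk.injEq]; tauto)] at h1
  have h2 : Dk p q (fun ω => (U ω, Y ω, Z ω)) - Dk p q (fun ω => (U ω, Z ω))
      - (condMI p Y U Z + Dk p q (fun ω => (Y ω, Z ω))) = 0 := by
    rw [condMI_eq, Hf_congr p (fun ω => (Y ω, U ω, Z ω)) (fun ω => (U ω, Y ω, Z ω))
      (by intro ω ω'; simp only [Prod.mk.injEq]; tauto)]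
    simp only [Hf, Dk]
    simp only [← Finset.sum_neg_distrib, ← Finset.sum_sub_distrib, ← Finset.sum_add_distrib]
    refine Finset.sum_eq_zero fun ω _ => ?_
    by_cases h : p ω = 0
    · simp [h]
    · have a1 := pushf_pos hp (fun ω => (U ω, Y ω, Z ω)) h
      have a2 := pushf_pos hp (fun ω => (U ω, Z ω)) h
      have a3 := pushf_pos hp (fun ω => (Y ω, Z ω)) h
      have a4 := pushf_pos hp Z h
      have b1 := pushf_pos hq (fun ω => (U ω, Y ω, Z ω)) (hpq ω h)
      have b2 := pushf_pos hq (fun ω => (U ω, Z ω)) (hpq ω h)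
      have b3 := pushf_pos hq (fun ω => (Y ω, Z ω)) (hpq ω h)
      have b4 := pushf_pos hq Z (hpq ω h)
      have e := congrArg Real.log (hm (U ω) (Y ω) (Z ω))
      rw [← hz] at e
      rw [Real.log_mul b1.ne' a4.ne', Real.log_mul b2.ne' b3.ne'] at e
      rw [Real.log_div a1.ne' b1.ne', Real.log_div a2.ne' b2.ne', Real.log_div a3.ne' b3.ne']
      linear_combination (-p ω) * e
  linarith

/-- the constraint step -/
theorem cstep {Ω μ σ υ α β γ : Type*} [Fintype Ω] [Fintype μ] [Fintype σ] [Fintype υ]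
    [Fintype α] [Fintype β] [Fintype γ] (p : Ω → ℝ) (hp : ∀ ω, 0 ≤ p ω)
    (M : Ω → μ) (S : Ω → σ) (U : Ω → υ) (X : Ω → α) (Y : Ω → β) (Z : Ω → γ)
    (hU : ∀ ω ω', M ω = M ω' → S ω = S ω' → U ω = U ω')
    (h1 : Hf p (fun ω => (S ω, X ω, Y ω, Z ω)) = Hf p S + Hf p (fun ω => (X ω, Y ω, Z ω)))
    (h2 : Hf p (fun ω => (S ω, Z ω)) = Hf p S + Hf p Z) :
    condMI p U X Z ≤
      (Hf p (fun ω => (S ω, X ω, Y ω, Z ω)) - Hf p (fun ω => (M ω, S ω, X ω, Y ω, Z ω)))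
      - (Hf p (fun ω => (S ω, Z ω)) - Hf p (fun ω => (M ω, S ω, Z ω))) := by
  have s1 := submod p hp (fun ω => (M ω, S ω)) Y (fun ω => (X ω, Z ω))
  have s2 := submod p hp (fun ω => (M ω, S ω)) X (fun ω => (U ω, Z ω))
  rw [Hf_congr p (fun ω => ((M ω, S ω), Y ω, X ω, Z ω)) (fun ω => (M ω, S ω, X ω, Y ω, Z ω))
      (by intro ω ω'; simp only [Prod.mk.injEq]; tauto),
    Hf_congr p (fun ω => (Y ω, X ω, Z ω)) (fun ω => (X ω, Y ω, Z ω))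
      (by intro ω ω'; simp only [Prod.mk.injEq]; tauto)] at s1
  rw [Hf_congr p (fun ω => ((M ω, S ω), X ω, U ω, Z ω)) (fun ω => ((M ω, S ω), X ω, Z ω))
      (by intro ω ω'; have := hU ω ω'; simp only [Prod.mk.injEq]; tauto),
    Hf_congr p (fun ω => ((M ω, S ω), U ω, Z ω)) (fun ω => (M ω, S ω, Z ω))
      (by intro ω ω'; have := hU ω ω'; simp only [Prod.mk.injEq]; tauto),
    Hf_congr p (fun ω => (X ω, U ω, Z ω)) (fun ω => (U ω, X ω, Z ω))
      (by intro ω ω'; simp only [Prod.mk.injEq]; tauto)] at s2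
  rw [condMI_eq, h1, h2]
  linarith

/-! mixing over a uniform index -/

theorem mix_pushf {Ω α : Type*} {n : ℕ} [Fintype Ω] (c : ℝ) (p : Ω → ℝ)
    (g : Fin n → Ω → α) (i : Fin n) (a : α) :
    pushf (fun t : Fin n × Ω => c * p t.2) (fun t => (t.1, g t.1 t.2)) (i, a)
      = c * pushf p (g i) a := by
  classical
  simp only [pushf_def, Fintype.sum_prod_type, Prod.mk.injEq]
  rw [Finset.sum_eq_single i]
  · simp [Finset.mul_sum, mul_ite]
  · intro j _ hj; simp [hj]
  · simp

theorem mix_pushf' {Ω α : Type*} {n : ℕ} [Fintype Ω] (c : ℝ) (p : Ω → ℝ)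
    (g : Fin n → Ω → α) (a : α) :
    pushf (fun t : Fin n × Ω => c * p t.2) (fun t => g t.1 t.2) a
      = c * ∑ i, pushf p (g i) a := by
  classical
  simp only [pushf_def, Fintype.sum_prod_type, Finset.mul_sum, mul_ite, mul_zero]

theorem mix_pushf_iid {Ω α : Type*} {n : ℕ} (hn : 0 < n) [Fintype Ω] (p : Ω → ℝ)
    (g : Fin n → Ω → α) (r : α → ℝ) (h : ∀ i, pushf p (g i) = r) :
    pushf (fun t : Fin n × Ω => (n : ℝ)⁻¹ * p t.2) (fun t => g t.1 t.2) = r := by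
  funext a
  have : (n : ℝ) ≠ 0 := by positivity
  rw [mix_pushf']
  simp [h, this]

theorem mix_Hf {Ω α : Type*} {n : ℕ} (hn : 0 < n) [Fintype Ω] (p : Ω → ℝ) (hp : IsPMF p)
    (g : Fin n → Ω → α) :
    Hf (fun t : Fin n × Ω => (n : ℝ)⁻¹ * p t.2) (fun t => (t.1, g t.1 t.2))
      = Real.log n + (n : ℝ)⁻¹ * ∑ i, Hf p (g i) := by
  have hn' : (0 : ℝ) < n := by positivity
  have h1 : Real.log n = (n : ℝ)⁻¹ * ∑ i : Fin n, Real.log n := by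
    simp [hn'.ne']
  rw [h1, ← mul_add, ← Finset.sum_add_distrib, Hf, Fintype.sum_prod_type,
    ← Finset.sum_neg_distrib, Finset.mul_sum]
  refine Finset.sum_congr rfl fun i _ => ?_
  simp only [mix_pushf]
  have h2 : Real.log n = ∑ ω, p ω * Real.log n := by
    rw [← Finset.sum_mul, hp.2, one_mul]
  rw [h2, Hf, ← Finset.sum_neg_distrib, ← Finset.sum_neg_distrib, ← Finset.sum_add_distrib,
    Finset.mul_sum]
  refine Finset.sum_congr rfl fun ω _ => ?_
  by_cases h : p ω = 0
  · simp [h]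
  · have := pushf_pos hp.1 (g i) h
    rw [Real.log_mul (by positivity) this.ne', Real.log_inv]
    ring

theorem mix_Hf_iid {Ω α : Type*} {n : ℕ} (hn : 0 < n) [Fintype Ω] (p : Ω → ℝ)
    (g : Fin n → Ω → α) (r : α → ℝ) (h : ∀ i, pushf p (g i) = r) :
    Hf (fun t : Fin n × Ω => (n : ℝ)⁻¹ * p t.2) (fun t => g t.1 t.2)
      = (n : ℝ)⁻¹ * ∑ i, Hf p (g i) := by
  rw [Hf, mix_pushf_iid hn p g r h, Fintype.sum_prod_type, ← Finset.sum_neg_distrib,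
    Finset.mul_sum]
  refine Finset.sum_congr rfl fun i _ => ?_
  rw [Hf, h, ← Finset.sum_neg_distrib, ← Finset.sum_neg_distrib, Finset.mul_sum]
  refine Finset.sum_congr rfl fun ω _ => ?_
  ring

theorem mix_Dk {Ω α : Type*} {n : ℕ} (hn : 0 < n) [Fintype Ω] (p q : Ω → ℝ)
    (g : Fin n → Ω → α) :
    Dk (fun t : Fin n × Ω => (n : ℝ)⁻¹ * p t.2) (fun t => (n : ℝ)⁻¹ * q t.2)
      (fun t => (t.1, g t.1 t.2)) = (n : ℝ)⁻¹ * ∑ i, Dk p q (g i) := by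
  have hn' : (n : ℝ)⁻¹ ≠ 0 := by positivity
  rw [Dk, Fintype.sum_prod_type, Finset.mul_sum]
  refine Finset.sum_congr rfl fun i _ => ?_
  simp only [mix_pushf]
  rw [Dk, Finset.mul_sum]
  refine Finset.sum_congr rfl fun ω _ => ?_
  rw [mul_div_mul_left _ _ hn']
  ring

/-- conditional mutual information of a mixture -/
theorem mix_condMI {Ω μ α β : Type*} {n : ℕ} (hn : 0 < n) [Fintype Ω] [Fintype μ] [Fintype α]
    [Fintype β] (p : Ω → ℝ) (hp : IsPMF p)
    (U : Fin n → Ω → μ) (A : Fin n → Ω → α) (B : Fin n → Ω → β) (r : α × β → ℝ)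
    (h : ∀ i, pushf p (fun ω => (A i ω, B i ω)) = r) :
    condMI (fun t : Fin n × Ω => (n : ℝ)⁻¹ * p t.2) (fun t => (t.1, U t.1 t.2))
      (fun t => A t.1 t.2) (fun t => B t.1 t.2) = (n : ℝ)⁻¹ * ∑ i, condMI p (U i) (A i) (B i) := by
  have hB : ∀ i, pushf p (B i) = pushf r Prod.snd := by
    intro i
    rw [← h i, pushf_pushf]
  simp only [condMI_eq]
  rw [Hf_congr _ (fun t : Fin n × Ω => ((t.1, U t.1 t.2), B t.1 t.2))
      (fun t => (t.1, (fun i ω => (U i ω, B i ω)) t.1 t.2))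
      (by intro ω ω'; simp only [Prod.mk.injEq]; tauto),
    Hf_congr _ (fun t : Fin n × Ω => ((t.1, U t.1 t.2), A t.1 t.2, B t.1 t.2))
      (fun t => (t.1, (fun i ω => (U i ω, A i ω, B i ω)) t.1 t.2))
      (by intro ω ω'; simp only [Prod.mk.injEq]; tauto),
    mix_Hf hn p hp (fun i ω => (U i ω, B i ω)), mix_Hf hn p hp (fun i ω => (U i ω, A i ω, B i ω)),
    mix_Hf_iid hn p (fun i ω => (A i ω, B i ω)) r h, mix_Hf_iid hn p B _ hB]
  simp only [Finset.sum_sub_distrib, Finset.sum_add_distrib]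
  ring

/-! product structure -/

/-- The joint law of message and source block. -/
def law {X W' K : Type*} {n : ℕ} (P : X × W' → ℝ) (κ : (Fin n → X) → K → ℝ) :
    K × (Fin n → X × W') → ℝ :=
  fun t => (∏ j, P (t.2 j)) * κ (fun j => (t.2 j).1) t.1

theorem sum_prod_eq_one {W : Type*} [Fintype W] {n : ℕ} (P : W → ℝ) (hP : ∑ a, P a = 1) :
    ∑ w : Fin n → W, ∏ j, P (w j) = 1 := by
  classical
  have := Finset.prod_univ_sum (fun _ : Fin n => (Finset.univ : Finset W)) (fun _ => P)
  simp only [Fintype.piFinset_univ, hP, Finset.prod_const_one] at this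
  exact this.symm

theorem law_pmf {X W' K : Type*} [Fintype X] [Fintype W'] [Fintype K] {n : ℕ}
    (P : X × W' → ℝ) (hP : IsPMF P) (κ : (Fin n → X) → K → ℝ) (hκ : ∀ x, IsPMF (κ x)) :
    IsPMF (law P κ) := by
  constructor
  · intro t
    exact mul_nonneg (Finset.prod_nonneg fun j _ => hP.1 _) ((hκ _).1 _)
  · rw [Fintype.sum_prod_type_right]
    simp only [law, ← Finset.mul_sum, (hκ _).2, mul_one]
    exact sum_prod_eq_one P hP.2

theorem swap_sum {W : Type*} [Fintype W] {n : ℕ} (P : W → ℝ) (i : Fin n)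
    (F : (Fin n → W) → W → ℝ) :
    ∑ w : Fin n → W, ∑ a, (∏ j, P (w j)) * P a * F w a
      = ∑ w : Fin n → W, ∑ a, (∏ j, P (w j)) * P a * F (Function.update w i a) (w i) := by
  classical
  let φ : (Fin n → W) × W → (Fin n → W) × W := fun s => (Function.update s.1 i s.2, s.1 i)
  have hφ : Function.Involutive φ := by
    rintro ⟨w, a⟩
    simp [φ]
  rw [← Fintype.sum_prod_type', ← Fintype.sum_prod_type',
    ← Equiv.sum_comp (hφ.toPerm φ)]
  refine Finset.sum_congr rfl fun s _ => ?_
  rcases s with ⟨w, a⟩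
  show (∏ j, P (Function.update w i a j)) * P (w i) * F (Function.update w i a) (w i) = _
  congr 1
  have h1 := Finset.prod_update_of_mem (Finset.mem_univ i) (fun j => P (w j)) (P a)
  have h2 : ∀ j, P (Function.update w i a j) = Function.update (fun j => P (w j)) i (P a) j := by
    intro j
    by_cases h : j = i
    · subst h; simp
    · simp [h]
  simp only [h2, h1]
  rw [← Finset.mul_prod_erase Finset.univ (fun j => P (w j)) (Finset.mem_univ i),
    Finset.sdiff_singleton_eq_erase]
  ring

theorem fix_coord {W : Type*} [Fintype W] [DecidableEq W] {n : ℕ} (P : W → ℝ)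
    (hP : ∑ a, P a = 1) (i : Fin n)
    (G : (Fin n → W) → ℝ) (b : W) :
    ∑ w : Fin n → W, (∏ j, P (w j)) * (if w i = b then G w else 0)
      = (∑ w : Fin n → W, (∏ j, P (w j)) * G (Function.update w i b)) * P b := by
  have := swap_sum P i (fun w a => if a = b then G (Function.update w i b) else 0)
  simp only [mul_ite, mul_zero, Finset.sum_ite_eq', Finset.mem_univ, if_true] at this
  rw [Finset.sum_mul]
  calc _ = ∑ w : Fin n → W, ∑ a, if w i = b then (∏ j, P (w j)) * P a *
        G (Function.update (Function.update w i a) i b) else 0 := by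
        refine Finset.sum_congr rfl fun w _ => ?_
        by_cases h : w i = b
        · subst h
          simp [← Finset.sum_mul, ← Finset.mul_sum, hP]
        · simp [h]
    _ = _ := this.symm
    _ = _ := Finset.sum_congr rfl fun w _ => by ring

/-- the induced single-letter channel -/
def chi {X W' K α : Type*} [Fintype X] [Fintype W'] [Fintype K] {n : ℕ} (P : X × W' → ℝ)
    (κ : (Fin n → X) → K → ℝ) (i : Fin n) (G : K × (Fin n → X × W') → α) (x : X) : α → ℝ :=
  pushf (fun t : K × (Fin n → X × W') =>
    (∏ j, P (t.2 j)) * κ (Function.update (fun j => (t.2 j).1) i x) t.1) G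

theorem chi_pmf {X W' K α : Type*} [Fintype X] [Fintype W'] [Fintype K] [Fintype α] {n : ℕ}
    (P : X × W' → ℝ) (hP : IsPMF P) (κ : (Fin n → X) → K → ℝ) (hκ : ∀ x, IsPMF (κ x))
    (i : Fin n) (G : K × (Fin n → X × W') → α) (x : X) : IsPMF (chi P κ i G x) := by
  constructor
  · exact pushf_nonneg (fun t => mul_nonneg (Finset.prod_nonneg fun j _ => hP.1 _)
      ((hκ _).1 _)) _
  · rw [chi, sum_pushf, Fintype.sum_prod_type_right]
    simp only [← Finset.mul_sum, (hκ _).2, mul_one]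
    exact sum_prod_eq_one P hP.2

theorem joint_law {X W' K α : Type*} [Fintype X] [Fintype W'] [Fintype K] {n : ℕ}
    (P : X × W' → ℝ) (hP : IsPMF P) (κ : (Fin n → X) → K → ℝ)
    (i : Fin n) (G : K × (Fin n → X × W') → α)
    (hG : ∀ m w a, G (m, Function.update w i a) = G (m, w)) (u : α) (b : X × W') :
    pushf (law P κ) (fun t => (G t, t.2 i)) (u, b) = chi P κ i G b.1 u * P b := by
  classical
  rw [chi, pushf_def, pushf_def, Fintype.sum_prod_type, Fintype.sum_prod_type, Finset.sum_mul]
  refine Finset.sum_congr rfl fun m _ => ?_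
  have := fix_coord P hP.2 i
    (fun w => if G (m, w) = u then κ (fun j => (w j).1) m else 0) b
  refine Eq.trans ?_ (this.trans ?_)
  · refine Finset.sum_congr rfl fun w _ => ?_
    simp only [law, Prod.mk.injEq]
    by_cases h1 : w i = b <;> by_cases h2 : G (m, w) = u <;> simp [h1, h2]
  · congr 1
    refine Finset.sum_congr rfl fun w _ => ?_
    have e : (fun j => (Function.update w i b j).1)
        = Function.update (fun j => (w j).1) i b.1 := by
      funext j
      by_cases h : j = i
      · subst h; simp
      · simp [h]
    have hG' := hG m w b
    rw [mul_ite, mul_zero]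
    congr 1
    · simp [hG']
    · rw [← e]

theorem indep_law {X W' K α : Type*} [Fintype X] [Fintype W'] [Fintype K] [Fintype α] {n : ℕ}
    (P : X × W' → ℝ) (hP : IsPMF P) (κ : (Fin n → X) → K → ℝ) (hκ : ∀ x, IsPMF (κ x))
    (i : Fin n) (S : (Fin n → X × W') → α)
    (hS : ∀ w a, S (Function.update w i a) = S w) (s : α) (b : X × W') :
    pushf (law P κ) (fun t => (S t.2, t.2 i)) (s, b)
      = pushf (law P κ) (fun t => S t.2) s * P b := by
  classical
  have h1 : ∀ x, chi P κ i (fun t => S t.2) x s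
      = ∑ w : Fin n → X × W', if S w = s then ∏ j, P (w j) else 0 := by
    intro x
    rw [chi, pushf_def, Fintype.sum_prod_type_right]
    refine Finset.sum_congr rfl fun w _ => ?_
    by_cases h : S w = s
    · simp [h, ← Finset.mul_sum, (hκ _).2]
    · simp [h]
  have h2 := fun b => joint_law P hP κ i (fun t => S t.2) (fun m w a => hS w a) s b
  rw [← pushf_fst (law P κ) (fun t => S t.2) (fun t => t.2 i) s]
  simp only [h2, h1]
  rw [← Finset.mul_sum, hP.2, mul_one]

theorem law_coord {X W' K : Type*} [Fintype X] [Fintype W'] [Fintype K] {n : ℕ}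
    (P : X × W' → ℝ) (hP : IsPMF P) (κ : (Fin n → X) → K → ℝ) (hκ : ∀ x, IsPMF (κ x))
    (i : Fin n) : pushf (law P κ) (fun t => t.2 i) = P := by
  funext b
  have h := indep_law P hP κ hκ i (fun _ => ()) (fun _ _ => rfl) () b
  have h1 : pushf (law P κ) (fun t => ()) () = 1 := by
    simp [pushf_def, (law_pmf P hP κ hκ).2]
  rw [h1, one_mul] at h
  rw [← h]
  rw [pushf_def, pushf_def]
  refine Finset.sum_congr rfl fun t _ => ?_
  by_cases h : t.2 i = b <;> simp [h]

theorem Hf_indep {X W' K α β : Type*} [Fintype X] [Fintype W'] [Fintype K] [Fintype α] {n : ℕ}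
    (P : X × W' → ℝ) (hP : IsPMF P) (κ : (Fin n → X) → K → ℝ) (hκ : ∀ x, IsPMF (κ x))
    (i : Fin n) (S : (Fin n → X × W') → α)
    (hS : ∀ w a, S (Function.update w i a) = S w) (c : X × W' → β) :
    Hf (law P κ) (fun t => (S t.2, c (t.2 i)))
      = Hf (law P κ) (fun t => S t.2) + Hf (law P κ) (fun t => c (t.2 i)) := by
  classical
  have h1 : ∀ s b, pushf (law P κ) (fun t => (S t.2, c (t.2 i))) (s, b)
      = pushf (law P κ) (fun t => S t.2) s * pushf (law P κ) (fun t => c (t.2 i)) b := by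
    intro s b
    rw [← pushf_pushf (law P κ) (fun t => (S t.2, t.2 i)) (fun v => (v.1, c v.2)),
      ← pushf_pushf (law P κ) (fun t => t.2 i) c, law_coord P hP κ hκ,
      pushf_def, pushf_def P c, Fintype.sum_prod_type]
    simp only [indep_law P hP κ hκ i S hS, Prod.mk.injEq]
    rw [Finset.sum_eq_single s, Finset.mul_sum]
    · simp [mul_ite]
    · intro s' _ hs'; simp [hs']
    · simp
  have hl := (law_pmf P hP κ hκ).1
  simp only [Hf, h1]
  rw [← neg_add, ← Finset.sum_add_distrib]
  congr 1
  refine Finset.sum_congr rfl fun t _ => ?_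
  by_cases h : law P κ t = 0
  · simp [h]
  · rw [Real.log_mul (pushf_pos hl (fun t => S t.2) h).ne'
      (pushf_pos hl (fun t => c (t.2 i)) h).ne', mul_add]

/-- pushing a product forward coordinatewise -/
theorem sum_prod_pushf {W A : Type*} [Fintype W] [Fintype A] {n : ℕ} (P : W → ℝ) (f : W → A)
    (h : (Fin n → A) → ℝ) :
    ∑ a : Fin n → A, (∏ j, pushf P f (a j)) * h a
      = ∑ w : Fin n → W, (∏ j, P (w j)) * h (fun j => f (w j)) := by
  classical
  have h1 : ∀ a : Fin n → A, ∏ j, pushf P f (a j)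
      = pushf (fun w : Fin n → W => ∏ j, P (w j)) (fun w j => f (w j)) a := by
    intro a
    have := Finset.prod_univ_sum (fun _ : Fin n => (Finset.univ : Finset W))
      (fun j w => if f w = a j then P w else 0)
    simp only [Fintype.piFinset_univ] at this
    simp only [pushf_def, this]
    refine Finset.sum_congr rfl fun w _ => ?_
    rw [Finset.prod_ite_zero]
    simp [funext_iff]
  simp only [h1]
  exact sum_pushf_mul _ _ h

/-- hybrid block: `a` before position `k`, `b` from `k` on -/
def Sk {W A B : Type*} {n : ℕ} (a : W → A) (b : W → B) (k : ℕ) (w : Fin n → W) :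
    Fin n → A ⊕ B :=
  fun j => if j.val < k then Sum.inl (a (w j)) else Sum.inr (b (w j))

/-- hybrid block with position `i` erased -/
def So {W A B : Type*} {n : ℕ} (a : W → A) (b : W → B) (i : Fin n) (w : Fin n → W) :
    Fin n → Option (A ⊕ B) :=
  fun j => if j = i then none else some (Sk a b i.val w j)

theorem Sk_eq_iff {W A B : Type*} {n : ℕ} (a : W → A) (b : W → B) (k : ℕ) (w w' : Fin n → W) :
    Sk a b k w = Sk a b k w' ↔
      ∀ j : Fin n, (j.val < k → a (w j) = a (w' j)) ∧ (¬ j.val < k → b (w j) = b (w' j)) := by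
  rw [funext_iff]
  refine forall_congr' fun j => ?_
  by_cases h : j.val < k <;> simp [Sk, h]

theorem So_eq_iff {W A B : Type*} {n : ℕ} (a : W → A) (b : W → B) (i : Fin n)
    (w w' : Fin n → W) :
    So a b i w = So a b i w' ↔
      ∀ j : Fin n, (j.val < i.val → a (w j) = a (w' j)) ∧ (i.val < j.val → b (w j) = b (w' j)) := by
  rw [funext_iff]
  refine forall_congr' fun j => ?_
  rcases lt_trichotomy j.val i.val with h | h | h
  · have h1 : j ≠ i := by rintro rfl; omega
    have h2 : ¬ i.val < j.val := by omega
    simp [So, Sk, h, h1, h2]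
  · have h1 : j = i := Fin.ext h
    subst h1
    simp [So]
  · have h1 : j ≠ i := by rintro rfl; omega
    have h2 : ¬ j.val < i.val := by omega
    simp [So, Sk, h, h1, h2]

theorem So_update {W A B : Type*} {n : ℕ} (a : W → A) (b : W → B) (i : Fin n)
    (w : Fin n → W) (c : W) : So a b i (Function.update w i c) = So a b i w := by
  rw [So_eq_iff]
  intro j
  by_cases h : j = i
  · subst h; simp
  · simp [h]

theorem Sk_succ_iff {W A B : Type*} {n : ℕ} (a : W → A) (b : W → B) (i : Fin n)
    (w w' : Fin n → W) : Sk a b (i.val + 1) w = Sk a b (i.val + 1) w' ↔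
      So a b i w = So a b i w' ∧ a (w i) = a (w' i) := by
  rw [Sk_eq_iff, So_eq_iff]
  constructor
  · intro h
    exact ⟨fun j => ⟨fun hj => (h j).1 (by omega), fun hj => (h j).2 (by omega)⟩,
      (h i).1 (by omega)⟩
  · rintro ⟨h, h1⟩ j
    refine ⟨fun hj => ?_, fun hj => (h j).2 (by omega)⟩
    by_cases hji : j = i
    · subst hji; exact h1
    · exact (h j).1 (by have := fun h => hji (Fin.ext h); omega)

theorem Sk_iff {W A B : Type*} {n : ℕ} (a : W → A) (b : W → B) (i : Fin n)
    (w w' : Fin n → W) : Sk a b i.val w = Sk a b i.val w' ↔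
      So a b i w = So a b i w' ∧ b (w i) = b (w' i) := by
  rw [Sk_eq_iff, So_eq_iff]
  constructor
  · intro h
    exact ⟨fun j => ⟨fun hj => (h j).1 (by omega), fun hj => (h j).2 (by omega)⟩,
      (h i).2 (by omega)⟩
  · rintro ⟨h, h1⟩ j
    refine ⟨fun hj => (h j).1 (by omega), fun hj => ?_⟩
    by_cases hji : j = i
    · subst hji; exact h1
    · exact (h j).2 (by have := fun h => hji (Fin.ext h); omega)

theorem tele (n : ℕ) (f : ℕ → ℝ) : ∑ i : Fin n, (f (i.val + 1) - f i.val) = f n - f 0 := by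
  rw [Fin.sum_univ_eq_sum_range (fun i => f (i + 1) - f i), Finset.sum_range_sub]

theorem gap_bounds {Ω α β : Type*} [Fintype Ω] [Fintype α] [Fintype β] (p : Ω → ℝ)
    (hp : IsPMF p) (M : Ω → α) (S : Ω → β) :
    Hf p S - Hf p (fun ω => (M ω, S ω)) ≤ 0 ∧
      -Real.log (Fintype.card α) ≤ Hf p S - Hf p (fun ω => (M ω, S ω)) := by
  have h1 := Hf_le_pair p hp.1 S M
  have h2 := Hf_pair_le p hp M S
  have h3 := Hf_le_card p hp M
  constructor <;> linarith

theorem constr_Z {X Y Z K : Type*} [Fintype X] [Fintype Y] [Fintype Z] [Fintype K] {n : ℕ}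
    (P : X × Y × Z → ℝ) (hP : IsPMF P) (κ : (Fin n → X) → K → ℝ) (hκ : ∀ x, IsPMF (κ x)) :
    ∑ i : Fin n, condMI (law P κ)
      (fun t => (t.1, So (fun w : X × Y × Z => w.2.1) (fun w => w.2.2) i t.2))
      (fun t => (t.2 i).1) (fun t => (t.2 i).2.2) ≤ Real.log (Fintype.card K) := by
  have hp := law_pmf P hP κ hκ
  let S : ℕ → (Fin n → X × Y × Z) → Fin n → (X × Y × Z) ⊕ Z := Sk id (fun w => w.2.2)
  let f : ℕ → ℝ := fun k => Hf (law P κ) (fun t => S k t.2)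
    - Hf (law P κ) (fun t => (t.1, S k t.2))
  have b0 := (gap_bounds (law P κ) hp (fun t => t.1) (fun t => S 0 t.2)).2
  have b1 := (gap_bounds (law P κ) hp (fun t => t.1) (fun t => S n t.2)).1
  have key : ∀ i : Fin n, condMI (law P κ)
      (fun t => (t.1, So (fun w : X × Y × Z => w.2.1) (fun w => w.2.2) i t.2))
      (fun t => (t.2 i).1) (fun t => (t.2 i).2.2) ≤ f (i.val + 1) - f i.val := by
    intro i
    have := cstep (law P κ) hp.1 (fun t => t.1)
      (fun t => So (id : X × Y × Z → _) (fun w => w.2.2) i t.2)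
      (fun t => (t.1, So (fun w : X × Y × Z => w.2.1) (fun w => w.2.2) i t.2))
      (fun t => (t.2 i).1) (fun t => (t.2 i).2.1) (fun t => (t.2 i).2.2)
      (by
        intro t t' h1 h2
        rw [So_eq_iff] at h2
        refine Prod.ext h1 ?_
        rw [So_eq_iff]
        exact fun j => ⟨fun hj => by have := (h2 j).1 hj; simp only [id] at this; rw [this],
          (h2 j).2⟩)
      (Hf_indep P hP κ hκ i (So (id : X × Y × Z → _) (fun w => w.2.2) i)
        (So_update _ _ i) (fun w => (w.1, w.2.1, w.2.2)))
      (Hf_indep P hP κ hκ i (So (id : X × Y × Z → _) (fun w => w.2.2) i)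
        (So_update _ _ i) (fun w => w.2.2))
    refine this.trans (le_of_eq ?_)
    simp only [f]
    rw [Hf_congr (law P κ) (fun t => S (i.val + 1) t.2)
        (fun t => (So (id : X × Y × Z → _) (fun w => w.2.2) i t.2, (t.2 i).1, (t.2 i).2.1, (t.2 i).2.2))
        (by intro t t'; simp only [S, Sk_succ_iff, Prod.mk.injEq, id, Prod.ext_iff]),
      Hf_congr (law P κ) (fun t => (t.1, S (i.val + 1) t.2))
        (fun t => (t.1, So (id : X × Y × Z → _) (fun w => w.2.2) i t.2, (t.2 i).1, (t.2 i).2.1, (t.2 i).2.2))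
        (by intro t t'; simp only [S, Sk_succ_iff, Prod.mk.injEq, id, Prod.ext_iff]),
      Hf_congr (law P κ) (fun t => S i.val t.2)
        (fun t => (So (id : X × Y × Z → _) (fun w => w.2.2) i t.2, (t.2 i).2.2))
        (by intro t t'; simp only [S, Sk_iff, Prod.mk.injEq]),
      Hf_congr (law P κ) (fun t => (t.1, S i.val t.2))
        (fun t => (t.1, So (id : X × Y × Z → _) (fun w => w.2.2) i t.2, (t.2 i).2.2))
        (by intro t t'; simp only [S, Sk_iff, Prod.mk.injEq])]
  calc _ ≤ ∑ i : Fin n, (f (i.val + 1) - f i.val) := Finset.sum_le_sum fun i _ => key i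
    _ = f n - f 0 := tele n f
    _ ≤ _ := by simp only [f]; linarith

theorem constr_Y {X Y Z K : Type*} [Fintype X] [Fintype Y] [Fintype Z] [Fintype K] {n : ℕ}
    (P : X × Y × Z → ℝ) (hP : IsPMF P) (κ : (Fin n → X) → K → ℝ) (hκ : ∀ x, IsPMF (κ x)) :
    ∑ i : Fin n, condMI (law P κ)
      (fun t => (t.1, So (fun w : X × Y × Z => w.2.1) (fun w => w.2.2) i t.2))
      (fun t => (t.2 i).1) (fun t => (t.2 i).2.1) ≤ Real.log (Fintype.card K) := by
  have hp := law_pmf P hP κ hκ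
  let S : ℕ → (Fin n → X × Y × Z) → Fin n → Y ⊕ (X × Y × Z) := Sk (fun w => w.2.1) id
  let f : ℕ → ℝ := fun k => Hf (law P κ) (fun t => (t.1, S k t.2))
    - Hf (law P κ) (fun t => S k t.2)
  have b0 := (gap_bounds (law P κ) hp (fun t => t.1) (fun t => S 0 t.2)).1
  have b1 := (gap_bounds (law P κ) hp (fun t => t.1) (fun t => S n t.2)).2
  have key : ∀ i : Fin n, condMI (law P κ)
      (fun t => (t.1, So (fun w : X × Y × Z => w.2.1) (fun w => w.2.2) i t.2))
      (fun t => (t.2 i).1) (fun t => (t.2 i).2.1) ≤ f (i.val + 1) - f i.val := by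
    intro i
    have hS0 : ∀ (w : Fin n → X × Y × Z) a, So (fun w : X × Y × Z => w.2.1) (id : X × Y × Z → X × Y × Z) i
        (Function.update w i a) = So (fun w : X × Y × Z => w.2.1) (id : X × Y × Z → X × Y × Z) i w :=
      fun w a => So_update _ _ i w a
    have hI1 := Hf_indep P hP κ hκ i _ hS0 (fun w : X × Y × Z => (w.1, w.2.2, w.2.1))
    have hI2 := Hf_indep P hP κ hκ i _ hS0 (fun w : X × Y × Z => w.2.1)
    have := cstep (law P κ) hp.1 (fun t => t.1)
      (fun t => So (fun w : X × Y × Z => w.2.1) (id : X × Y × Z → X × Y × Z) i t.2)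
      (fun t => (t.1, So (fun w : X × Y × Z => w.2.1) (fun w => w.2.2) i t.2))
      (fun t => (t.2 i).1) (fun t => (t.2 i).2.2) (fun t => (t.2 i).2.1)
      (by
        intro t t' h1 h2
        rw [So_eq_iff] at h2
        refine Prod.ext h1 ?_
        rw [So_eq_iff]
        exact fun j => ⟨(h2 j).1,
          fun hj => by have := (h2 j).2 hj; simp only [id] at this; rw [this]⟩)
      hI1 hI2
    refine this.trans (le_of_eq ?_)
    simp only [f]
    rw [Hf_congr (law P κ) (fun t => S i.val t.2)
        (fun t => (So (fun w : X × Y × Z => w.2.1) (id : X × Y × Z → X × Y × Z) i t.2, (t.2 i).1, (t.2 i).2.2, (t.2 i).2.1))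
        (by
          intro t t'
          simp only [S, Sk_iff, Prod.mk.injEq, id, Prod.ext_iff]
          tauto),
      Hf_congr (law P κ) (fun t => (t.1, S i.val t.2))
        (fun t => (t.1, So (fun w : X × Y × Z => w.2.1) (id : X × Y × Z → X × Y × Z) i t.2, (t.2 i).1, (t.2 i).2.2, (t.2 i).2.1))
        (by
          intro t t'
          simp only [S, Sk_iff, Prod.mk.injEq, id, Prod.ext_iff]
          tauto),
      Hf_congr (law P κ) (fun t => S (i.val + 1) t.2)
        (fun t => (So (fun w : X × Y × Z => w.2.1) (id : X × Y × Z → X × Y × Z) i t.2, (t.2 i).2.1))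
        (by intro t t'; simp only [S, Sk_succ_iff, Prod.mk.injEq]),
      Hf_congr (law P κ) (fun t => (t.1, S (i.val + 1) t.2))
        (fun t => (t.1, So (fun w : X × Y × Z => w.2.1) (id : X × Y × Z → X × Y × Z) i t.2, (t.2 i).2.1))
        (by intro t t'; simp only [S, Sk_succ_iff, Prod.mk.injEq])]
    ring
  calc _ ≤ ∑ i : Fin n, (f (i.val + 1) - f i.val) := Finset.sum_le_sum fun i _ => key i
    _ = f n - f 0 := tele n f
    _ ≤ _ := by simp only [f]; linarith

theorem pushf_equiv {Ω α β : Type*} [Fintype Ω] (p : Ω → ℝ) (f : Ω → α) (e : α ≃ β) (b : β) :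
    pushf p (fun ω => e (f ω)) b = pushf p f (e.symm b) := by
  classical
  rw [pushf_def, pushf_def]
  refine Finset.sum_congr rfl fun ω _ => ?_
  by_cases h : f ω = e.symm b
  · simp [h]
  · rw [if_neg h, if_neg]
    rintro rfl
    simp at h

theorem Dk_MZ {X Y Z K : Type*} [Fintype X] [Fintype Y] [Fintype Z] [Fintype K] {n : ℕ}
    (P Q : X × Y × Z → ℝ) (κ : (Fin n → X) → K → ℝ)
    (hPQXZ : pushf P (fun w => (w.1, w.2.2)) = pushf Q (fun w => (w.1, w.2.2))) :
    Dk (law P κ) (law Q κ) (fun t => (t.1, fun j => (t.2 j).2.2)) = 0 := by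
  classical
  have h : ∀ P' : X × Y × Z → ℝ, ∀ m z,
      pushf (law P' κ) (fun t => (t.1, fun j => (t.2 j).2.2)) (m, z)
      = ∑ a : Fin n → X × Z, (∏ j, pushf P' (fun w => (w.1, w.2.2)) (a j)) *
          (if (fun j => (a j).2) = z then κ (fun j => (a j).1) m else 0) := by
    intro P' m z
    rw [sum_prod_pushf P' (fun w => (w.1, w.2.2))
      (fun a => if (fun j => (a j).2) = z then κ (fun j => (a j).1) m else 0),
      pushf_def, Fintype.sum_prod_type_right]
    refine Finset.sum_congr rfl fun w _ => ?_
    rw [Finset.sum_eq_single m]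
    · by_cases h : (fun j => (w j).2.2) = z <;> simp [h, law]
    · intro m' _ hm'; simp [hm']
    · simp
  rw [Dk]
  refine Finset.sum_eq_zero fun t _ => ?_
  rw [h P, h Q, hPQXZ]
  by_cases h0 : (∑ a : Fin n → X × Z, (∏ j, pushf Q (fun w => (w.1, w.2.2)) (a j)) *
          (if (fun j => (a j).2) = (fun j => (t.2 j).2.2) then κ (fun j => (a j).1) t.1 else 0)) = 0
  · rw [h0]; simp
  · rw [div_self h0]; simp

theorem law_MY {X Y Z K : Type*} [Fintype X] [Fintype Y] [Fintype Z] [Fintype K] {n : ℕ}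
    (P : X × Y × Z → ℝ) (κ : (Fin n → X) → K → ℝ) :
    (fun mw : K × (Fin n → Y) => ∑ x : Fin n → X,
      (∏ i, pushf P (fun w => (w.1, w.2.1)) (x i, mw.2 i)) * κ x mw.1)
    = pushf (law P κ) (fun t => (t.1, fun j => (t.2 j).2.1)) := by
  classical
  funext mw
  obtain ⟨m, y⟩ := mw
  have h1 : pushf (law P κ) (fun t => (t.1, fun j => (t.2 j).2.1)) (m, y)
      = ∑ a : Fin n → X × Y, (∏ j, pushf P (fun w => (w.1, w.2.1)) (a j)) *
          (if (fun j => (a j).2) = y then κ (fun j => (a j).1) m else 0) := by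
    rw [sum_prod_pushf P (fun w => (w.1, w.2.1))
      (fun a => if (fun j => (a j).2) = y then κ (fun j => (a j).1) m else 0),
      pushf_def, Fintype.sum_prod_type_right]
    refine Finset.sum_congr rfl fun w _ => ?_
    rw [Finset.sum_eq_single m]
    · by_cases h : (fun j => (w j).2.1) = y <;> simp [h, law]
    · intro m' _ hm'; simp [hm']
    · simp
  rw [h1, ← Equiv.sum_comp (Equiv.arrowProdEquivProdArrow (Fin n) (fun _ => X) (fun _ => Y)).symm,
    Fintype.sum_prod_type]
  refine Finset.sum_congr rfl fun x _ => ?_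
  rw [Finset.sum_eq_single y]
  · simp [Equiv.arrowProdEquivProdArrow]
  · intro y' _ hy'
    simp [Equiv.arrowProdEquivProdArrow, hy']
  · simp

theorem klDiv_eq {Ω α : Type*} [Fintype Ω] [Fintype α] (p q : Ω → ℝ)
    (hp : ∀ ω, 0 ≤ p ω) (hq : ∀ ω, 0 ≤ q ω) (hpq : ∀ ω, p ω ≠ 0 → q ω ≠ 0) (f : Ω → α) :
    klDiv (pushf p f) (pushf q f) = ((Dk p q f : ℝ) : EReal) := by
  classical
  rw [klDiv, if_pos, sum_pushf_mul p f (fun a => Real.log (pushf p f a / pushf q f a)), Dk]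
  intro a h
  by_contra h1
  rw [pushf_def] at h1
  obtain ⟨ω, -, hω⟩ := Finset.exists_ne_zero_of_sum_ne_zero h1
  split_ifs at hω with h2
  · subst h2
    exact (pushf_pos hq f (hpq ω hω)).ne' h
  · exact hω rfl

/-- Dk only depends on the laws -/
theorem Dk_pushf {Ω α β : Type*} [Fintype Ω] [Fintype α] (p q : Ω → ℝ) (g : Ω → α) (f : α → β) :
    Dk (pushf p g) (pushf q g) f = Dk p q (fun ω => f (g ω)) := by
  simp only [Dk, pushf_pushf]
  exact sum_pushf_mul p g (fun a => Real.log (pushf p (fun ω => f (g ω)) (f a) /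
    pushf q (fun ω => f (g ω)) (f a)))

theorem law_iid {X W' K β : Type*} [Fintype X] [Fintype W'] [Fintype K] {n : ℕ}
    (P : X × W' → ℝ) (hP : IsPMF P) (κ : (Fin n → X) → K → ℝ) (hκ : ∀ x, IsPMF (κ x))
    (c : X × W' → β) (i : Fin n) :
    pushf (law P κ) (fun t => c (t.2 i)) = pushf P c := by
  rw [← pushf_pushf (law P κ) (fun t => t.2 i) c, law_coord P hP κ hκ]

/-- the law of the time-shared variables -/
def mxl {X W' K : Type*} {n : ℕ} (P : X × W' → ℝ) (κ : (Fin n → X) → K → ℝ) :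
    Fin n × K × (Fin n → X × W') → ℝ :=
  fun t => (n : ℝ)⁻¹ * law P κ t.2

theorem mxl_iid {X W' K β : Type*} [Fintype X] [Fintype W'] [Fintype K] {n : ℕ} (hn : 0 < n)
    (P : X × W' → ℝ) (hP : IsPMF P) (κ : (Fin n → X) → K → ℝ) (hκ : ∀ x, IsPMF (κ x))
    (c : X × W' → β) :
    pushf (mxl P κ) (fun t => c (t.2.2 t.1)) = pushf P c :=
  mix_pushf_iid hn (law P κ) (fun i t => c (t.2 i)) _ (law_iid P hP κ hκ c)

/-- the single-letter auxiliary channel -/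
def chm {X W' K μ : Type*} [Fintype X] [Fintype W'] [Fintype K] {n m : ℕ} (P : X × W' → ℝ)
    (κ : (Fin n → X) → K → ℝ) (U : Fin n → K × (Fin n → X × W') → μ)
    (e : Fin n × μ ≃ Fin m) : X → Fin m → ℝ := fun x k =>
    (n : ℝ)⁻¹ * chi P κ (e.symm k).1 (U (e.symm k).1) x (e.symm k).2

theorem chm_pmf {X W' K μ : Type*} [Fintype X] [Fintype W'] [Fintype K] [Fintype μ] {n m : ℕ}
    (hn : 0 < n) (P : X × W' → ℝ) (hP : IsPMF P)
    (κ : (Fin n → X) → K → ℝ) (hκ : ∀ x, IsPMF (κ x)) (U : Fin n → K × (Fin n → X × W') → μ)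
    (e : Fin n × μ ≃ Fin m) (x : X) : IsPMF (chm P κ U e x) := by
  have hn' : (0 : ℝ) < n := by positivity
  constructor
  · intro k
    exact mul_nonneg (by positivity) ((chi_pmf P hP κ hκ _ _ _).1 _)
  · rw [← Equiv.sum_comp e]
    simp only [chm, Equiv.symm_apply_apply]
    rw [Fintype.sum_prod_type]
    simp only [← Finset.mul_sum]
    simp [(chi_pmf P hP κ hκ _ _ _).2, hn'.ne']

theorem chm_joint {X W' K μ : Type*} [Fintype X] [Fintype W'] [Fintype K] {n m : ℕ}
    (P : X × W' → ℝ) (hP : IsPMF P)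
    (κ : (Fin n → X) → K → ℝ) (U : Fin n → K × (Fin n → X × W') → μ)
    (hU : ∀ i m w a, U i (m, Function.update w i a) = U i (m, w))
    (e : Fin n × μ ≃ Fin m) :
    (fun w : Fin m × X × W' => chm P κ U e w.2.1 w.1 * P w.2)
      = pushf (mxl P κ) (fun t => (e (t.1, U t.1 t.2), t.2.2 t.1)) := by
  funext w
  obtain ⟨k, b⟩ := w
  have h1 := mix_pushf (n : ℝ)⁻¹ (law P κ) (fun i t => (U i t, t.2 i)) (e.symm k).1
    ((e.symm k).2, b)
  rw [joint_law P hP κ _ (U _) (hU _)] at h1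
  have h2 := pushf_equiv (mxl P κ) (fun t => (t.1, U t.1 t.2, t.2.2 t.1))
    ((Equiv.prodAssoc (Fin n) _ _).symm.trans (Equiv.prodCongr e (Equiv.refl _))) (k, b)
  have h3 := h2.trans h1
  refine Eq.trans ?_ h3.symm
  simp only [chm]; ring

theorem markov_ch {X Y Z μ : Type*} [Fintype X] [Fintype Y] [Fintype Z] [Fintype μ]
    (Q : X × Y × Z → ℝ)
    (hMarkov : ∀ x y z, Q (x, y, z) * pushf Q (fun w => w.2.2) z
      = pushf Q (fun w => (w.1, w.2.2)) (x, z) * pushf Q (fun w => (w.2.1, w.2.2)) (y, z))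
    (c : X → μ → ℝ) (u : μ) (y : Y) (z : Z) :
    pushf (fun w : μ × X × Y × Z => c w.2.1 w.1 * Q w.2)
        (fun w => (w.1, w.2.2.1, w.2.2.2)) (u, y, z) * pushf Q (fun w => w.2.2) z
      = pushf (fun w : μ × X × Y × Z => c w.2.1 w.1 * Q w.2) (fun w => (w.1, w.2.2.2)) (u, z)
        * pushf Q (fun w => (w.2.1, w.2.2)) (y, z) := by
  classical
  have e4 : pushf (fun w : μ × X × Y × Z => c w.2.1 w.1 * Q w.2)
        (fun w => (w.1, w.2.2.1, w.2.2.2)) (u, y, z) = ∑ x, c x u * Q (x, y, z) := by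
    rw [pushf_def, Fintype.sum_prod_type, Finset.sum_eq_single u]
    · rw [Fintype.sum_prod_type]
      refine Finset.sum_congr rfl fun x _ => ?_
      rw [Finset.sum_eq_single (y, z)]
      · simp
      · rintro ⟨y', z'⟩ _ h
        rw [if_neg]
        simpa using h
      · simp
    · intro u' _ h; simp [h]
    · simp
  have e5 : pushf (fun w : μ × X × Y × Z => c w.2.1 w.1 * Q w.2) (fun w => (w.1, w.2.2.2)) (u, z)
      = ∑ x, c x u * pushf Q (fun w => (w.1, w.2.2)) (x, z) := by
    rw [pushf_def, Fintype.sum_prod_type, Finset.sum_eq_single u]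
    · rw [Fintype.sum_prod_type]
      refine Finset.sum_congr rfl fun x _ => ?_
      have e6 : pushf Q (fun w => (w.1, w.2.2)) (x, z)
          = ∑ w : Y × Z, if w.2 = z then Q (x, w) else 0 := by
        rw [pushf_def, Fintype.sum_prod_type, Finset.sum_eq_single x]
        · refine Finset.sum_congr rfl fun w _ => ?_
          by_cases h : w.2 = z <;> simp [h]
        · intro x' _ h; simp [h]
        · simp
      rw [e6, Finset.mul_sum]
      refine Finset.sum_congr rfl fun w _ => ?_
      by_cases h : w.2 = z <;> simp [h]
    · intro u' _ h; simp [h]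
    · simp
  rw [e4, e5, Finset.sum_mul, Finset.sum_mul]
  refine Finset.sum_congr rfl fun x _ => ?_
  rw [mul_assoc, hMarkov, mul_assoc]

/-- the auxiliary variable at time `i` -/
def Uf {X Y Z K : Type*} {n : ℕ} (i : Fin n) (t : K × (Fin n → X × Y × Z)) :
    K × (Fin n → Option (Y ⊕ Z)) :=
  (t.1, So (fun w : X × Y × Z => w.2.1) (fun w => w.2.2) i t.2)

theorem mix_Dk_Uf {X Y Z K α : Type*} [Fintype X] [Fintype Y] [Fintype Z] [Fintype K]
    {n m : ℕ} (hn : 0 < n)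
    (P Q : X × Y × Z → ℝ) (κ : (Fin n → X) → K → ℝ)
    (e : Fin n × (K × (Fin n → Option (Y ⊕ Z))) ≃ Fin m) (c : X × Y × Z → α) (s : ℕ)
    (h : ∀ (i : Fin n) (w w' : Fin n → X × Y × Z),
      Sk (fun w : X × Y × Z => w.2.1) (fun w => w.2.2) (i.val + s) w
        = Sk (fun w : X × Y × Z => w.2.1) (fun w => w.2.2) (i.val + s) w' ↔
      So (fun w : X × Y × Z => w.2.1) (fun w => w.2.2) i w
        = So (fun w : X × Y × Z => w.2.1) (fun w => w.2.2) i w' ∧ c (w i) = c (w' i)) :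
    Dk (mxl P κ) (mxl Q κ) (fun t => (e (t.1, Uf t.1 t.2), c (t.2.2 t.1)))
      = (n : ℝ)⁻¹ * ∑ i : Fin n, Dk (law P κ) (law Q κ)
        (fun t => (t.1, Sk (fun w : X × Y × Z => w.2.1) (fun w => w.2.2) (i.val + s) t.2)) := by
  have := mix_Dk hn (law P κ) (law Q κ) (fun i t =>
    (t.1, Sk (fun w : X × Y × Z => w.2.1) (fun w => w.2.2) (i.val + s) t.2))
  rw [← this]
  refine Dk_congr _ _ _ _ ?_
  rintro ⟨i, m, w⟩ ⟨i', m', w'⟩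
  simp only [Uf, Prod.mk.injEq, EmbeddingLike.apply_eq_iff_eq]
  by_cases hi : i = i'
  · subst hi
    rw [h]
    simp only [true_and, and_assoc]
  · simp [hi]

theorem chm_condMI {X Y Z K β : Type*} [Fintype X] [Fintype Y] [Fintype Z] [Fintype K]
    [Fintype β] {n m : ℕ}
    (hn : 0 < n) (P : X × Y × Z → ℝ) (hP : IsPMF P)
    (κ : (Fin n → X) → K → ℝ) (hκ : ∀ x, IsPMF (κ x))
    (e : Fin n × (K × (Fin n → Option (Y ⊕ Z))) ≃ Fin m) (c : X × Y × Z → β) :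
    condMI (mxl P κ) (fun t => e (t.1, Uf t.1 t.2)) (fun t => (t.2.2 t.1).1)
      (fun t => c (t.2.2 t.1)) =
    (n : ℝ)⁻¹ * ∑ i, condMI (law P κ) (Uf i) (fun t => (t.2 i).1) (fun t => c (t.2 i)) := by
  rw [← mix_condMI hn (law P κ) (law_pmf P hP κ hκ) Uf (fun i t => (t.2 i).1)
    (fun i t => c (t.2 i)) _ (law_iid P hP κ hκ (fun w => (w.1, c w)))]
  simp only [condMI_eq]
  congr 1
  congr 1
  congr 1
  · exact Hf_congr _ _ _ (by
      intro t t'; simp only [Prod.mk.injEq, EmbeddingLike.apply_eq_iff_eq])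
  · exact Hf_congr _ _ _ (by
      intro t t'; simp only [Prod.mk.injEq, EmbeddingLike.apply_eq_iff_eq])

theorem core {X Y Z K : Type*} [Fintype X] [Fintype Y] [Fintype Z] [Fintype K] {n : ℕ}
    (hn : 0 < n) (R : ℝ) (P Q : X × Y × Z → ℝ) (hP : IsPMF P) (hQ : IsPMF Q)
    (hMarkov : ∀ x y z, Q (x, y, z) * pushf Q (fun w => w.2.2) z
      = pushf Q (fun w => (w.1, w.2.2)) (x, z) * pushf Q (fun w => (w.2.1, w.2.2)) (y, z))
    (hPQXZ : pushf P (fun w => (w.1, w.2.2)) = pushf Q (fun w => (w.1, w.2.2)))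
    (κ : (Fin n → X) → K → ℝ) (hκ : ∀ x, IsPMF (κ x))
    (hK : Real.log (Fintype.card K) ≤ n * R) :
    ∃ (m : ℕ) (ch : X → Fin m → ℝ),
      (∀ x, IsPMF (ch x)) ∧
      condMI (fun w : Fin m × X × Y × Z => ch w.2.1 w.1 * P w.2)
        (fun w => w.1) (fun w => w.2.1) (fun w => w.2.2.1) ≤ R ∧
      condMI (fun w : Fin m × X × Y × Z => ch w.2.1 w.1 * P w.2)
        (fun w => w.1) (fun w => w.2.1) (fun w => w.2.2.2) ≤ R ∧
      ((∀ w, P w ≠ 0 → Q w ≠ 0) →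
        (n : ℝ)⁻¹ * Dk (law P κ) (law Q κ) (fun t => (t.1, fun j => (t.2 j).2.1)) ≤
          condMI (fun w : Fin m × X × Y × Z => ch w.2.1 w.1 * P w.2)
              (fun w => w.2.2.1) (fun w => w.1) (fun w => w.2.2.2)
            + Dk P Q (fun w => w.2)) := by
  classical
  have hn' : (0 : ℝ) < n := by positivity
  obtain ⟨m, ⟨e⟩⟩ : ∃ m : ℕ, Nonempty (Fin n × (K × (Fin n → Option (Y ⊕ Z))) ≃ Fin m) :=
    ⟨_, ⟨Fintype.equivFin _⟩⟩
  have hU : ∀ (i : Fin n) (m : K) (w : Fin n → X × Y × Z) a,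
      Uf i (m, Function.update w i a) = Uf i (m, w) := by
    intro i m w a
    simp only [Uf, So_update]
  have hpm := law_pmf P hP κ hκ
  have hle : ∀ s : ℝ, s ≤ Real.log (Fintype.card K) → (n : ℝ)⁻¹ * s ≤ R := by
    intro s hs
    rw [inv_mul_le_iff₀ hn']
    linarith
  refine ⟨m, chm P κ Uf e, chm_pmf hn P hP κ hκ _ e, ?_, ?_, ?_⟩
  · rw [chm_joint P hP κ Uf hU e, condMI_pushf]
    exact le_of_eq_of_le (chm_condMI hn P hP κ hκ e (fun w => w.2.1))
      (hle _ (constr_Y P hP κ hκ))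
  · rw [chm_joint P hP κ Uf hU e, condMI_pushf]
    exact le_of_eq_of_le (chm_condMI hn P hP κ hκ e (fun w => w.2.2))
      (hle _ (constr_Z P hP κ hκ))
  · intro hac
    have hqm := law_pmf Q hQ κ hκ
    have hmp : ∀ t, 0 ≤ mxl P κ t := fun t => mul_nonneg (by positivity) (hpm.1 _)
    have hmq : ∀ t, 0 ≤ mxl Q κ t := fun t => mul_nonneg (by positivity) (hqm.1 _)
    have hlac : ∀ t, law P κ t ≠ 0 → law Q κ t ≠ 0 := by
      intro t h
      simp only [law, mul_ne_zero_iff, Finset.prod_ne_zero_iff] at h ⊢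
      exact ⟨fun j hj => hac _ (h.1 j hj), h.2⟩
    have hmac : ∀ t, mxl P κ t ≠ 0 → mxl Q κ t ≠ 0 := by
      intro t h
      simp only [mxl, mul_ne_zero_iff] at h ⊢
      exact ⟨h.1, hlac _ h.2⟩
    have hst := step (mxl P κ) (mxl Q κ) hmp hmq hmac (fun t => e (t.1, Uf t.1 t.2))
      (fun t => (t.2.2 t.1).2.1) (fun t => (t.2.2 t.1).2.2)
      (by
        intro u y z
        have e1 := markov_ch Q hMarkov (chm Q κ Uf e) u y z
        rw [chm_joint Q hQ κ Uf hU e, pushf_pushf, pushf_pushf] at e1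
        rw [mxl_iid hn Q hQ κ hκ (fun w => w.2.2),
          mxl_iid hn Q hQ κ hκ (fun w => (w.2.1, w.2.2))]
        exact e1)
      (by
        intro z
        rw [mxl_iid hn P hP κ hκ (fun w => w.2.2), mxl_iid hn Q hQ κ hκ (fun w => w.2.2),
          ← pushf_pushf P (fun w => (w.1, w.2.2)) Prod.snd, hPQXZ, pushf_pushf])
    rw [chm_joint P hP κ Uf hU e, condMI_pushf]
    have d1 : Dk (mxl P κ) (mxl Q κ) (fun t => ((t.2.2 t.1).2.1, (t.2.2 t.1).2.2))
        = Dk P Q (fun w => w.2) := by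
      have := Dk_pushf (mxl P κ) (mxl Q κ) (fun t => t.2.2 t.1) (fun w => w.2)
      have h3 : ∀ P' : X × Y × Z → ℝ, pushf P' (fun w => w) = P' := by
        intro P'; funext a
        rw [pushf_def, Finset.sum_eq_single a]
        · simp
        · intro b _ hb; simp [hb]
        · simp
      rw [mxl_iid hn P hP κ hκ (fun w => w), mxl_iid hn Q hQ κ hκ (fun w => w), h3, h3] at this
      rw [this]
    have d2 := mix_Dk_Uf hn P Q κ e (fun w => w.2.1) 1 (fun i w w' => Sk_succ_iff _ _ i w w')
    have d3 := mix_Dk_Uf hn P Q κ e (fun w => w.2.2) 0 (fun i w w' => Sk_iff _ _ i w w')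
    rw [d1, d2, d3, ← mul_sub, ← Finset.sum_sub_distrib] at hst
    have d4 := tele n (fun k => Dk (law P κ) (law Q κ)
      (fun t => (t.1, Sk (fun w : X × Y × Z => w.2.1) (fun w => w.2.2) k t.2)))
    simp only [add_zero] at hst
    rw [d4] at hst
    have f0 : Dk (law P κ) (law Q κ)
        (fun t => (t.1, Sk (fun w : X × Y × Z => w.2.1) (fun w => w.2.2) 0 t.2)) = 0 := by
      rw [← Dk_MZ P Q κ hPQXZ]
      refine Dk_congr _ _ _ _ ?_
      intro t t'
      simp only [Prod.mk.injEq, Sk_eq_iff]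
      simp only [funext_iff]
      simp
    have fn : Dk (law P κ) (law Q κ)
        (fun t => (t.1, Sk (fun w : X × Y × Z => w.2.1) (fun w => w.2.2) n t.2))
        = Dk (law P κ) (law Q κ) (fun t => (t.1, fun j => (t.2 j).2.1)) := by
      refine Dk_congr _ _ _ _ ?_
      intro t t'
      simp only [Prod.mk.injEq, Sk_eq_iff]
      simp only [funext_iff]
      simp
    rw [f0, fn, sub_zero] at hst
    exact hst

end helpers

/-- If `X → Z → Y` is Markov under `Q` and `P_XZ = Q_XZ`, with
`D(P_XY‖Q_XY) < ∞`, then `E_{P_XY,Q_XY}(R)` is at most the supremum of `I_P(Y;U|Z)` over all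
finite `𝒰` and channels `P_{U|X}` with `I_P(U;X|Y) ≤ R` and `I_P(U;X|Z) ≤ R`, plus
`D(P_YZ‖Q_YZ)`. -/
theorem errExp_le_sup_condMI_add_klDiv {X Y Z : Type*} [Fintype X] [Fintype Y] [Fintype Z]
    (R : ℝ) (hR : 0 < R)
    (P Q : X × Y × Z → ℝ) (hP : IsPMF P) (hQ : IsPMF Q)
    (hMarkov : ∀ x y z, Q (x, y, z) * pushf Q (fun w => w.2.2) z
      = pushf Q (fun w => (w.1, w.2.2)) (x, z) * pushf Q (fun w => (w.2.1, w.2.2)) (y, z))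
    (hPQXZ : pushf P (fun w => (w.1, w.2.2)) = pushf Q (fun w => (w.1, w.2.2)))
    (hXY : klDiv (pushf P (fun w => (w.1, w.2.1))) (pushf Q (fun w => (w.1, w.2.1))) < ⊤) :
    errExp (pushf P (fun w => (w.1, w.2.1))) (pushf Q (fun w => (w.1, w.2.1))) R
      ≤ sSup {v : EReal | ∃ (m : ℕ) (ch : X → Fin m → ℝ),
            (∀ x, IsPMF (ch x)) ∧
            condMI (fun w : Fin m × X × Y × Z => ch w.2.1 w.1 * P w.2)
              (fun w => w.1) (fun w => w.2.1) (fun w => w.2.2.1) ≤ R ∧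
            condMI (fun w : Fin m × X × Y × Z => ch w.2.1 w.1 * P w.2)
              (fun w => w.1) (fun w => w.2.1) (fun w => w.2.2.2) ≤ R ∧
            v = ((condMI (fun w : Fin m × X × Y × Z => ch w.2.1 w.1 * P w.2)
              (fun w => w.2.2.1) (fun w => w.1) (fun w => w.2.2.2) : ℝ) : EReal)}
        + klDiv (pushf P (fun w => w.2)) (pushf Q (fun w => w.2)) := by
  refine sSup_le ?_
  rintro v ⟨n, hn, κ, hκ, rfl⟩
  have hn' : (0 : ℝ) < n := by positivity
  have hK : Real.log (Fintype.card (Fin (2 ^ ⌊(n : ℝ) * R⌋₊))) ≤ n * R := by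
    rw [Fintype.card_fin]
    push_cast
    rw [Real.log_pow]
    have h1 : (⌊(n : ℝ) * R⌋₊ : ℝ) ≤ n * R := Nat.floor_le (by positivity)
    have h2 : Real.log 2 ≤ 1 := by
      have := Real.log_two_lt_d9
      linarith
    have h3 : (0 : ℝ) ≤ (⌊(n : ℝ) * R⌋₊ : ℝ) := by positivity
    nlinarith
  obtain ⟨m, ch, hch, hc1, hc2, hmain⟩ := core hn R P Q hP hQ hMarkov hPQXZ κ hκ hK
  refine le_trans ?_ (add_le_add (a := ((condMI (fun w : Fin m × X × Y × Z => ch w.2.1 w.1 * P w.2)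
    (fun w => w.2.2.1) (fun w => w.1) (fun w => w.2.2.2) : ℝ) : EReal)) (le_sSup ?_) le_rfl)
  swap
  · exact ⟨m, ch, hch, hc1, hc2, rfl⟩
  by_cases hac : ∀ w, P w ≠ 0 → Q w ≠ 0
  · have hlac : ∀ t, law P κ t ≠ 0 → law Q κ t ≠ 0 := by
      intro t h
      simp only [law, mul_ne_zero_iff, Finset.prod_ne_zero_iff] at h ⊢
      exact ⟨fun j hj => hac _ (h.1 j hj), h.2⟩
    rw [law_MY P κ, law_MY Q κ, klDiv_eq _ _ (law_pmf P hP κ hκ).1 (law_pmf Q hQ κ hκ).1 hlac,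
      klDiv_eq P Q hP.1 hQ.1 hac]
    exact_mod_cast hmain hac
  · have : klDiv (pushf P (fun w => w.2)) (pushf Q (fun w => w.2)) = ⊤ := by
      rw [klDiv, if_neg]
      intro hyz
      apply hac
      rintro ⟨x, y, z⟩ hw hq
      have h1 := pushf_pos hP.1 (fun w => (w.1, w.2.2)) hw
      have h2 := pushf_pos hP.1 (fun w => w.2) hw
      have h3 : pushf Q (fun w => w.2) (y, z) ≠ 0 := fun h => h2.ne' (hyz _ h)
      have h4 := hMarkov x y z
      rw [hq, zero_mul] at h4
      rw [hPQXZ] at h1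
      exact mul_ne_zero h1.ne' h3 h4.symm
    rw [this, EReal.coe_add_top]
    exact le_top

end
end
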